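/- (Vector-valued mixed weak-type inequality for I_α) Let 0<α<mn and q = n/(mn−α). Let u_1,…,u_m and v be weights on ℝ^n, write u⃗^{mq} = (u_1^{mq},…,u_m^{mq}) and ν = ∏_{i=1}^m u_i^q, and suppose either u⃗^{mq} ∈ A_{(1,…,1)} and ν v^q ∈ A_∞, or u_1^{mq},…,u_m^{mq} ∈ A_1 and v^{mq} ∈ A_∞. Let r satisfy either q<r<2 and 1<r<2, or r=2. Set S(f⃗) = I_α(f⃗)/v. Then for countable families {f^i_{k_i}}_{k_i} ⊂ L^1(u_i), i=1,…,m, there exists a constant C>0 such that ‖(Σ_{k_1,…,k_m} |S(f^1_{k_1},…,f^m_{k_m})|^r)^{1/r}‖_{L^{q,∞}(ν v^q)} ≤ C ∏_{i=1}^m ‖(Σ_{k_i} |f^i_{k_i}|^r)^{1/r}‖_{L^1(u_i)}. -/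

import Mathlib

open MeasureTheory ENNReal Set

noncomputable section

/-- Euclidean space `ℝ^n`. -/
abbrev ESp (n : ℕ) := EuclideanSpace ℝ (Fin n)

/-- An axis-parallel cube with positive finite side length. -/
def IsCube {n : ℕ} (Q : Set (ESp n)) : Prop :=
  ∃ (c : Fin n → ℝ) (h : ℝ), 0 < h ∧ Q = {x : ESp n | ∀ i, c i ≤ x i ∧ x i ≤ c i + h}

/-- The measure `w(E) = ∫_E w` associated to a weight `w`. -/
def wMeas {n : ℕ} (w : ESp n → ℝ) (E : Set (ESp n)) : ℝ≥0∞ :=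
  ∫⁻ x in E, ENNReal.ofReal (w x)

/-- A weight: a nonnegative locally integrable function, positive (and finite) a.e. -/
def IsWeight {n : ℕ} (w : ESp n → ℝ) : Prop :=
  Measurable w ∧ (∀ x, 0 ≤ w x) ∧ (∀ᵐ x ∂(volume : Measure (ESp n)), 0 < w x) ∧
    ∀ Q : Set (ESp n), IsCube Q → wMeas w Q < ⊤

/-- `C` is an admissible `A₁` constant for `w`. -/
def A1Const {n : ℕ} (w : ESp n → ℝ) (C : ℝ≥0∞) : Prop :=
  ∀ Q : Set (ESp n), IsCube Q →
    (volume Q)⁻¹ * wMeas w Q ≤ C * essInf (fun x => ENNReal.ofReal (w x)) (volume.restrict Q)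

/-- The Muckenhoupt class `A₁`. -/
def IsA1 {n : ℕ} (w : ESp n → ℝ) : Prop := ∃ C : ℝ≥0∞, C < ⊤ ∧ A1Const w C

/-- The Muckenhoupt class `A_p`, `1 < p < ∞`. -/
def IsAp {n : ℕ} (w : ESp n → ℝ) (p : ℝ) : Prop :=
  ∃ C : ℝ≥0∞, C < ⊤ ∧ ∀ Q : Set (ESp n), IsCube Q →
    ((volume Q)⁻¹ * wMeas w Q) *
      ((volume Q)⁻¹ * ∫⁻ x in Q, ENNReal.ofReal (w x) ^ (1 - p / (p - 1))) ^ (p - 1) ≤ C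

/-- The class `A_∞ = ⋃_{p ≥ 1} A_p`. -/
def IsAinfty {n : ℕ} (w : ESp n → ℝ) : Prop :=
  IsA1 w ∨ ∃ p : ℝ, 1 < p ∧ IsAp w p

/-- The Hardy–Littlewood maximal function (over cubes). -/
def maxFn {n : ℕ} (f : ESp n → ℝ) (x : ESp n) : ℝ≥0∞ :=
  ⨆ (Q : Set (ESp n)) (_ : IsCube Q) (_ : x ∈ Q),
    (volume Q)⁻¹ * ∫⁻ y in Q, ENNReal.ofReal |f y|

/-- The Fujii–Wilson `A_∞` constant. -/
def FW {n : ℕ} (w : ESp n → ℝ) : ℝ≥0∞ :=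
  ⨆ (Q : Set (ESp n)) (_ : IsCube Q),
    (wMeas w Q)⁻¹ * ∫⁻ x in Q, maxFn (Q.indicator w) x

/-- The weighted weak `L^{q,∞}(w)` quasinorm of `g`. -/
def wnorm {n : ℕ} (g : ESp n → ℝ≥0∞) (q : ℝ) (w : ESp n → ℝ) : ℝ≥0∞ :=
  ⨆ (t : ℝ) (_ : 0 < t), ENNReal.ofReal t * (wMeas w {x | ENNReal.ofReal t < g x}) ^ (1 / q)

/-- The weighted `L¹(w)` norm. -/
def L1norm {n : ℕ} (f : ESp n → ℝ) (w : ESp n → ℝ) : ℝ≥0∞ :=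
  ∫⁻ x, ENNReal.ofReal (|f x| * w x)

/-- The fractional maximal operator `M_α`. -/
def fracM {n : ℕ} (α : ℝ) (f : ESp n → ℝ) (x : ESp n) : ℝ≥0∞ :=
  ⨆ (Q : Set (ESp n)) (_ : IsCube Q) (_ : x ∈ Q),
    ((volume Q) ^ (1 - α / (n : ℝ)))⁻¹ * ∫⁻ y in Q, ENNReal.ofReal |f y|

/-- The fractional integral (Riesz potential) `I_α`. -/
def fracI {n : ℕ} (α : ℝ) (f : ESp n → ℝ) (x : ESp n) : ℝ :=
  ∫ y, f y / dist x y ^ ((n : ℝ) - α)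

/-- The multi(sub)linear maximal function `𝓜`. -/
def multiM {n m : ℕ} (f : Fin m → ESp n → ℝ) (x : ESp n) : ℝ≥0∞ :=
  ⨆ (Q : Set (ESp n)) (_ : IsCube Q) (_ : x ∈ Q),
    ∏ i, (volume Q)⁻¹ * ∫⁻ y in Q, ENNReal.ofReal |f i y|

/-- The multi(sub)linear fractional maximal operator `𝓜_α`. -/
def multiMα {n m : ℕ} (α : ℝ) (f : Fin m → ESp n → ℝ) (x : ESp n) : ℝ≥0∞ :=
  ⨆ (Q : Set (ESp n)) (_ : IsCube Q) (_ : x ∈ Q),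
    ∏ i, ((volume Q) ^ (1 - α / ((m : ℝ) * (n : ℝ))))⁻¹ * ∫⁻ y in Q, ENNReal.ofReal |f i y|

/-- The multilinear fractional integral `𝓘_α`. -/
def multiIα {n m : ℕ} (α : ℝ) (f : Fin m → ESp n → ℝ) (x : ESp n) : ℝ :=
  ∫ y : Fin m → ESp n, (∏ i, f i (y i)) / (∑ i, dist x (y i)) ^ ((m : ℝ) * (n : ℝ) - α)

/-- The multilinear class `A_{(1,…,1)}`. -/
def A11 {n m : ℕ} (w : Fin m → ESp n → ℝ) : Prop :=
  ∃ C : ℝ≥0∞, C < ⊤ ∧ ∀ Q : Set (ESp n), IsCube Q →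
    ((volume Q)⁻¹ * ∫⁻ x in Q, ENNReal.ofReal (∏ i, w i x ^ ((m : ℝ)⁻¹))) ^ (m : ℝ) *
      ∏ i, (essInf (fun x => ENNReal.ofReal (w i x)) (volume.restrict Q))⁻¹ ≤ C

/-!
Write `D = ∏ uᵢ^q v^q` for the mixed weight and `p = m q > 1`. The kernel of `𝓘_α / v` is
dominated by `c ∏ᵢ Kᵢ(x, yᵢ) uᵢ(yᵢ)`, one linear kernel `Kᵢ` per variable, so Minkowski's inequality
takes the `ℓ^r` sum inside the integrals and leaves a product of `m` linear operators. By the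
weak-type Hölder inequality it suffices to bound each of them from `L¹` to `L^{p,∞}(D)`, and since
`L^{p,∞}` is normable for `p > 1` (Kolmogorov) it is enough that `‖Kᵢ(·, y)‖_{L^{p,∞}(D)}` is
bounded uniformly in `y`.

In both cases of the theorem `Kᵢ^p = Uᵢ gᵢ(·, y) / D` with `gᵢ(x, y)` comparable to the inverse of
a measure of the ball about `y` of radius `|x - y|`. On each dyadic shell about `y` a level set of
this function is a set where one weight is dominated by another. The power decay
`ω(E) / ω(B) ≤ K (|E| / |B|)^η` of `A_∞` measures makes the contributions of the shells decay
geometrically away from a critical radius, so they sum to the uniform bound.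

The balls of the sup norm on `ℝ^n` are the cubes, hence all weight classes are tested on balls.
-/

section ProductFormulas

theorem lintegral_fin_nat_prod_eq_prod {m : ℕ} {X : Fin m → Type*}
    [∀ i, MeasurableSpace (X i)] (μ : ∀ i, Measure (X i)) [∀ i, SigmaFinite (μ i)]
    {f : ∀ i, X i → ℝ≥0∞} (hf : ∀ i, Measurable (f i)) :
    ∫⁻ y, ∏ i, f i (y i) ∂Measure.pi μ = ∏ i, ∫⁻ y, f i y ∂μ i := by
  induction m with
  | zero => simp
  | succ m ih =>
    rw [← (measurePreserving_piFinSuccAbove μ 0).symm.lintegral_comp_emb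
      (MeasurableEquiv.measurableEmbedding _), Fin.prod_univ_succ,
      ← ih (fun i => μ i.succ) fun i => hf i.succ, ← lintegral_prod_mul (hf 0).aemeasurable <|
        (Finset.measurable_fun_prod _ fun i _ =>
          (hf i.succ).comp (measurable_pi_apply i)).aemeasurable]
    simp_rw [MeasurableEquiv.piFinSuccAbove_symm_apply, Fin.insertNthEquiv, Fin.prod_univ_succ,
      Fin.insertNth_zero]
    rfl

theorem tsum_fin_nat_prod_eq_prod {m : ℕ} {ι : Fin m → Type*} (a : ∀ i, ι i → ℝ≥0∞) :
    ∑' k : ∀ i, ι i, ∏ i, a i (k i) = ∏ i, ∑' k, a i k := by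
  induction m with
  | zero => simp
  | succ m ih =>
    rw [← (Fin.consEquiv ι).tsum_eq, ENNReal.tsum_prod', Fin.prod_univ_succ,
      ← ih fun i => a i.succ, ← ENNReal.tsum_mul_right]
    congr 1 with k
    rw [← ENNReal.tsum_mul_left]
    simp [Fin.consEquiv, Fin.prod_univ_succ]

end ProductFormulas

section Minkowski

variable {X : Type*} [MeasurableSpace X] {μ : Measure X} {ι : Type*} {r : ℝ}

theorem sum_lintegral_rpow_le (hr : 1 < r) {f : ι → X → ℝ≥0∞} (hf : ∀ k, Measurable (f k))
    (s : Finset ι) (hfin : ∀ k ∈ s, ∫⁻ x, f k x ∂μ ≠ ⊤) :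
    (∑ k ∈ s, (∫⁻ x, f k x ∂μ) ^ r) ^ (1 / r) ≤ ∫⁻ x, (∑ k ∈ s, f k x ^ r) ^ (1 / r) ∂μ := by
  have hr0 : 0 < r := by linarith
  have hconj : (r / (r - 1)).HolderConjugate r := (Real.HolderConjugate.conjExponent hr).symm
  set a : ι → ℝ≥0∞ := fun k => ∫⁻ x, f k x ∂μ
  set S : ℝ≥0∞ := ∑ k ∈ s, a k ^ r with hS
  have hStop : S ≠ ⊤ := by
    simpa [hS, ENNReal.sum_eq_top] using fun k hk =>
      ENNReal.rpow_ne_top_of_nonneg hr0.le (hfin k hk)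
  rcases eq_or_ne S 0 with hS0 | hS0
  · simp [hS0, hr0]
  have hpow : ∑ k ∈ s, (a k ^ (r - 1)) ^ (r / (r - 1)) = S := by
    refine Finset.sum_congr rfl fun k _ => ?_
    rw [← ENNReal.rpow_mul, mul_div_cancel₀ _ (sub_pos.2 hr).ne']
  have key : S ^ (1 - 1 / r) * S ^ (1 / r) ≤
      S ^ (1 - 1 / r) * ∫⁻ x, (∑ k ∈ s, f k x ^ r) ^ (1 / r) ∂μ := calc
    S ^ (1 - 1 / r) * S ^ (1 / r) = ∑ k ∈ s, a k ^ (r - 1) * a k := by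
      rw [← ENNReal.rpow_add _ _ hS0 hStop, sub_add_cancel, ENNReal.rpow_one, hS]
      refine Finset.sum_congr rfl fun k _ => ?_
      conv_rhs => rw [← ENNReal.rpow_one (a k), ← ENNReal.rpow_mul, one_mul,
        ← ENNReal.rpow_add_of_nonneg _ _ (by linarith) zero_le_one, sub_add_cancel]
    _ = ∫⁻ x, ∑ k ∈ s, a k ^ (r - 1) * f k x ∂μ := by
      rw [lintegral_finsetSum _ fun k _ => (hf k).const_mul _]
      simp_rw [lintegral_const_mul _ (hf _), a]
    _ ≤ ∫⁻ x, S ^ (1 - 1 / r) * (∑ k ∈ s, f k x ^ r) ^ (1 / r) ∂μ := by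
      refine lintegral_mono fun x => ?_
      rw [show 1 - 1 / r = 1 / (r / (r - 1)) by field_simp, ← hpow]
      exact ENNReal.inner_le_Lp_mul_Lq s _ _ hconj
    _ = _ := lintegral_const_mul _ <|
      (Finset.measurable_sum _ fun k _ => (hf k).pow_const r).pow_const _
  exact (ENNReal.mul_le_mul_iff_right (by simp [hS0, hStop]) (by simp [hS0, hStop])).1 key

theorem tsum_lintegral_rpow_le (hr : 1 ≤ r) {f : ι → X → ℝ≥0∞} (hf : ∀ k, Measurable (f k)) :
    (∑' k, (∫⁻ x, f k x ∂μ) ^ r) ^ (1 / r) ≤ ∫⁻ x, (∑' k, f k x ^ r) ^ (1 / r) ∂μ := by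
  have hr0 : 0 < r := by linarith
  have single_le (k : ι) : ∫⁻ x, f k x ∂μ ≤ ∫⁻ x, (∑' k, f k x ^ r) ^ (1 / r) ∂μ :=
    lintegral_mono fun x => by
      rw [one_div, ENNReal.le_rpow_inv_iff hr0]
      exact ENNReal.le_tsum k
  by_cases htop : ∫⁻ x, (∑' k, f k x ^ r) ^ (1 / r) ∂μ = ⊤
  · exact htop ▸ le_top
  rw [one_div, ENNReal.rpow_inv_le_iff hr0, ENNReal.tsum_eq_iSup_sum]
  refine iSup_le fun s => ?_
  rw [← ENNReal.rpow_inv_le_iff hr0, ← one_div]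
  have mono : ∫⁻ x, (∑ k ∈ s, f k x ^ r) ^ (1 / r) ∂μ ≤ ∫⁻ x, (∑' k, f k x ^ r) ^ (1 / r) ∂μ := by
    gcongr
    exact ENNReal.sum_le_tsum s
  refine le_trans ?_ mono
  rcases hr.eq_or_lt with rfl | hr
  · simp [lintegral_finsetSum s fun k _ => hf k]
  · exact sum_lintegral_rpow_le hr hf s fun k _ => ne_top_of_le_ne_top htop (single_le k)

end Minkowski

theorem tsum_lintegral_mul_prod_rpow_le {m : ℕ} {X : Type*} [MeasurableSpace X] {μ : Measure X}
    [SigmaFinite μ] {ι : Fin m → Type*} {r : ℝ} (hr : 1 ≤ r)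
    {κ : (Fin m → X) → ℝ≥0∞} {φ : Fin m → X → ℝ≥0∞} (hφ : ∀ i, Measurable (φ i)) {c : ℝ≥0∞}
    (hκ : ∀ᵐ y ∂Measure.pi fun _ => μ, κ y ≤ c * ∏ i, φ i (y i))
    {f : ∀ i, ι i → X → ℝ≥0∞} (hf : ∀ i k, Measurable (f i k)) :
    (∑' k : ∀ i, ι i, (∫⁻ y, κ y * ∏ i, f i (k i) (y i) ∂Measure.pi fun _ => μ) ^ r) ^ (1 / r) ≤
      c * ∏ i, ∫⁻ y, φ i y * (∑' k, f i k y ^ r) ^ (1 / r) ∂μ := by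
  have hr0 : 0 < r := by linarith
  have hφf (i : Fin m) (k : ι i) : Measurable fun y => φ i y * f i k y := (hφ i).mul (hf i k)
  calc (∑' k : ∀ i, ι i, (∫⁻ y, κ y * ∏ i, f i (k i) (y i) ∂Measure.pi fun _ => μ) ^ r) ^ (1 / r)
      ≤ (∑' k : ∀ i, ι i, (c * ∏ i, ∫⁻ y, φ i y * f i (k i) y ∂μ) ^ r) ^ (1 / r) := by
        gcongr with k
        have hprod : Measurable fun y : Fin m → X => ∏ i, φ i (y i) * f i (k i) (y i) :=
          Finset.measurable_fun_prod _ fun i _ => (hφf i (k i)).comp (measurable_pi_apply i)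
        rw [← lintegral_fin_nat_prod_eq_prod _ fun i => hφf i (k i),
          ← lintegral_const_mul _ hprod]
        refine lintegral_mono_ae (hκ.mono fun y hy => ?_)
        rw [Finset.prod_mul_distrib, ← mul_assoc]
        gcongr
    _ = c * ∏ i, (∑' k, (∫⁻ y, φ i y * f i k y ∂μ) ^ r) ^ (1 / r) := by
        simp_rw [ENNReal.mul_rpow_of_nonneg _ _ hr0.le, ENNReal.tsum_mul_left,
          ← ENNReal.prod_rpow_of_nonneg hr0.le,
          tsum_fin_nat_prod_eq_prod fun i k => (∫⁻ y, φ i y * f i k y ∂μ) ^ r,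
          ENNReal.mul_rpow_of_nonneg _ _ (one_div_nonneg.2 hr0.le),
          ← ENNReal.prod_rpow_of_nonneg (one_div_nonneg.2 hr0.le)]
        rw [← ENNReal.rpow_mul, mul_one_div_cancel hr0.ne', ENNReal.rpow_one]
    _ ≤ c * ∏ i, ∫⁻ y, φ i y * (∑' k, f i k y ^ r) ^ (1 / r) ∂μ := by
        gcongr with i
        refine (tsum_lintegral_rpow_le hr (hφf i)).trans (lintegral_mono fun y => ?_)
        simp_rw [ENNReal.mul_rpow_of_nonneg _ _ hr0.le, ENNReal.tsum_mul_left,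
          ENNReal.mul_rpow_of_nonneg _ _ (one_div_nonneg.2 hr0.le)]
        rw [← ENNReal.rpow_mul, mul_one_div_cancel hr0.ne', ENNReal.rpow_one]

/-- The weak-type quasinorm `‖g‖_{L^{p,∞}(μ)} = sup_t t μ{g > t}^{1/p}`; the level `t = ∞`
contributes `0` when `0 < p`. -/
def weakENorm {X : Type*} [MeasurableSpace X] (μ : Measure X) (g : X → ℝ≥0∞) (p : ℝ) : ℝ≥0∞ :=
  ⨆ t : ℝ≥0∞, t * μ {x | t < g x} ^ (1 / p)

section WeakNorm

variable {X : Type*} [MeasurableSpace X] {μ : Measure X} {g h : X → ℝ≥0∞} {p : ℝ}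

theorem le_weakENorm (t : ℝ≥0∞) : t * μ {x | t < g x} ^ (1 / p) ≤ weakENorm μ g p :=
  le_iSup (fun t : ℝ≥0∞ => t * μ {x | t < g x} ^ (1 / p)) t

theorem weakENorm_mono_ae (hp : 0 < p) (hgh : ∀ᵐ x ∂μ, g x ≤ h x) :
    weakENorm μ g p ≤ weakENorm μ h p := by
  refine iSup_mono fun t => ?_
  gcongr t * ?_ ^ _
  exact measure_mono_ae (hgh.mono fun x hx (ht : t < g x) => ht.trans_le hx)

theorem weakENorm_const_mul_le (hp : 0 < p) {c : ℝ≥0∞} (hc : c ≠ ⊤) :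
    weakENorm μ (fun x => c * g x) p ≤ c * weakENorm μ g p := by
  rcases eq_or_ne c 0 with rfl | hc0
  · simp [weakENorm, hp]
  refine iSup_le fun t => ?_
  calc t * μ {x | t < c * g x} ^ (1 / p)
      = c * (t / c * μ {x | t / c < g x} ^ (1 / p)) := by
        rw [← mul_assoc, ENNReal.mul_div_cancel hc0 hc]
        simp_rw [ENNReal.div_lt_iff (Or.inl hc0) (Or.inl hc), mul_comm]
    _ ≤ c * weakENorm μ g p := by gcongr; exact le_weakENorm _

theorem weakENorm_rpow {s : ℝ} (hs : 0 < s) :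
    weakENorm μ (fun x => g x ^ s) p = weakENorm μ g (p * s) ^ s := by
  rw [weakENorm, weakENorm, (ENNReal.monotone_rpow_of_nonneg hs.le).map_iSup_of_continuousAt
    ENNReal.continuous_rpow_const.continuousAt (by simp [hs]),
    ← (ENNReal.orderIsoRpow s hs).toEquiv.iSup_comp]
  refine iSup_congr fun t => ?_
  simp only [RelIso.coe_fn_toEquiv, ENNReal.orderIsoRpow_apply, ENNReal.rpow_lt_rpow_iff hs,
    ENNReal.mul_rpow_of_nonneg _ _ hs.le]
  rw [← ENNReal.rpow_mul, one_div_mul_eq_div, div_mul_cancel_right₀ hs.ne', one_div]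

theorem measure_lt_le_weakENorm_div_rpow (hp : 0 < p) {t : ℝ≥0∞} (ht0 : t ≠ 0) (ht : t ≠ ⊤) :
    μ {x | t < g x} ≤ (weakENorm μ g p / t) ^ p := by
  rw [← ENNReal.rpow_inv_le_iff hp, ← one_div, ENNReal.le_div_iff_mul_le (Or.inl ht0) (Or.inl ht),
    mul_comm]
  exact le_weakENorm t

theorem weakENorm_one_le_of_forall_measure_lt_le_div {B : ℝ≥0∞}
    (h : ∀ t, t ≠ 0 → t ≠ ⊤ → μ {x | t < g x} ≤ B / t) : weakENorm μ g 1 ≤ B := by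
  refine iSup_le fun t => ?_
  rcases eq_or_ne t 0 with rfl | ht0
  · simp
  rcases eq_or_ne t ⊤ with rfl | ht
  · simp
  rw [div_one, ENNReal.rpow_one]
  exact (mul_le_mul_right (h t ht0 ht) t).trans_eq (ENNReal.mul_div_cancel ht0 ht)

theorem ae_eq_zero_of_weakENorm_eq_zero (hp : 0 < p) (h0 : weakENorm μ g p = 0) :
    ∀ᵐ x ∂μ, g x = 0 := by
  have hcover : {x | ¬g x = 0} ⊆ ⋃ j : ℕ, {x | ((j : ℝ≥0∞) + 1)⁻¹ < g x} := fun x hx => by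
    obtain ⟨j, hj⟩ := ENNReal.exists_inv_nat_lt hx
    exact mem_iUnion.2 ⟨j, hj.trans_le' (ENNReal.inv_le_inv.2 le_self_add)⟩
  refine measure_mono_null hcover (measure_iUnion_null fun j => le_zero_iff.1 ?_)
  simpa [h0, hp] using measure_lt_le_weakENorm_div_rpow (μ := μ) (g := g) hp
    (t := ((j : ℝ≥0∞) + 1)⁻¹) (by simp) (by simp)

theorem le_add_tsum_dyadic (s : ℝ≥0∞) {a : ℝ≥0∞} (ha : a ≠ 0) :
    s ≤ a + ∑' j : ℕ, if 2 ^ j * a < s then 2 ^ (j + 1) * a else 0 := by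
  by_cases hex : ∃ j : ℕ, s ≤ 2 ^ j * a
  · classical
    rcases Nat.eq_zero_or_pos (Nat.find hex) with h0 | hpos
    · have hs : s ≤ a := by simpa [h0] using Nat.find_spec hex
      exact hs.trans le_self_add
    · obtain ⟨j, hj⟩ := Nat.exists_eq_add_one.2 hpos
      have hlt : 2 ^ j * a < s := not_le.1 (Nat.find_min hex (by omega))
      refine le_add_left (le_trans ?_ (ENNReal.le_tsum j))
      simpa [hlt, hj] using Nat.find_spec hex
  · push Not at hex
    have hsum : ∑' j : ℕ, (if 2 ^ j * a < s then 2 ^ (j + 1) * a else 0) = ⊤ := by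
      rw [eq_top_iff, ← ENNReal.tsum_const_eq_top_of_ne_zero (α := ℕ) ha]
      refine ENNReal.tsum_le_tsum fun j => ?_
      rw [if_pos (hex j)]
      exact le_mul_of_one_le_left' (one_le_pow₀ one_le_two)
    simp [hsum]

theorem exists_setLIntegral_le_add (hp : 1 < p) :
    ∃ C : ℝ≥0∞, C ≠ ⊤ ∧ ∀ g : X → ℝ≥0∞, Measurable g → ∀ a : ℝ≥0∞, a ≠ 0 → a ≠ ⊤ → ∀ E : Set X,
      ∫⁻ x in E, g x ∂μ ≤ a * μ E + C * weakENorm μ g p ^ p * a ^ (1 - p) := by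
  have hratio : (2 : ℝ≥0∞) ^ (1 - p) < 1 :=
    ENNReal.rpow_lt_one_of_one_lt_of_neg one_lt_two (by linarith)
  refine ⟨2 * (1 - 2 ^ (1 - p))⁻¹, ENNReal.mul_ne_top (by simp) ?_, fun g hg a ha0 ha E => ?_⟩
  · exact ENNReal.inv_ne_top.2 (tsub_pos_of_lt hratio).ne'
  have layer_le (j : ℕ) : ∫⁻ x in E, (if 2 ^ j * a < g x then 2 ^ (j + 1) * a else 0) ∂μ ≤
      (2 ^ (1 - p)) ^ j * (2 * weakENorm μ g p ^ p * a ^ (1 - p)) := by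
    have hl0 : (2 : ℝ≥0∞) ^ j * a ≠ 0 := by positivity
    have hl : (2 : ℝ≥0∞) ^ j * a ≠ ⊤ := by finiteness
    calc ∫⁻ x in E, (if 2 ^ j * a < g x then 2 ^ (j + 1) * a else 0) ∂μ
        ≤ ∫⁻ x, {x | 2 ^ j * a < g x}.indicator (fun _ => 2 ^ (j + 1) * a) x ∂μ := by
          simpa only [indicator, Set.mem_ofPred_eq] using setLIntegral_le_lintegral _ _
      _ = 2 ^ (j + 1) * a * μ {x | 2 ^ j * a < g x} :=
          lintegral_indicator_const (measurableSet_lt measurable_const hg) _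
      _ ≤ 2 * (2 ^ j * a) * (weakENorm μ g p / (2 ^ j * a)) ^ p := by
          rw [pow_succ', mul_assoc 2]
          gcongr
          exact measure_lt_le_weakENorm_div_rpow (by linarith) hl0 hl
      _ = 2 * weakENorm μ g p ^ p * (2 ^ j * a) ^ (1 - p) := by
          rw [ENNReal.div_rpow_of_nonneg _ _ (by linarith), div_eq_mul_inv, ← ENNReal.rpow_neg,
            sub_eq_add_neg, ENNReal.rpow_add _ _ hl0 hl, ENNReal.rpow_one]
          ring
      _ = _ := by
          rw [ENNReal.mul_rpow_of_ne_top (by finiteness) ha, ← ENNReal.rpow_natCast,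
            ← ENNReal.rpow_natCast, ← ENNReal.rpow_mul, ← ENNReal.rpow_mul, mul_comm (j : ℝ)]
          ring
  calc ∫⁻ x in E, g x ∂μ
      ≤ ∫⁻ x in E, (a + ∑' j : ℕ, if 2 ^ j * a < g x then 2 ^ (j + 1) * a else 0) ∂μ :=
        lintegral_mono fun x => le_add_tsum_dyadic (g x) ha0
    _ = a * μ E + ∑' j : ℕ, ∫⁻ x in E, (if 2 ^ j * a < g x then 2 ^ (j + 1) * a else 0) ∂μ := by
        rw [lintegral_add_left measurable_const, setLIntegral_const, lintegral_tsum fun j =>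
          (Measurable.ite (measurableSet_lt measurable_const hg) measurable_const
            measurable_const).aemeasurable]
    _ ≤ a * μ E + ∑' j : ℕ, (2 ^ (1 - p)) ^ j * (2 * weakENorm μ g p ^ p * a ^ (1 - p)) := by
        gcongr with j
        exact layer_le j
    _ = _ := by
        rw [ENNReal.tsum_mul_right, ENNReal.tsum_geometric]
        ring

/-- Kolmogorov's inequality. -/
theorem exists_setLIntegral_le_weakENorm (hp : 1 < p) :
    ∃ C : ℝ≥0∞, C ≠ ⊤ ∧ ∀ g : X → ℝ≥0∞, Measurable g → ∀ E : Set X, μ E ≠ ⊤ →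
      ∫⁻ x in E, g x ∂μ ≤ C * weakENorm μ g p * μ E ^ (1 - 1 / p) := by
  obtain ⟨C, hC, hle⟩ := exists_setLIntegral_le_add (μ := μ) hp
  have hp0 : 0 < p := by linarith
  refine ⟨1 + C, by finiteness, fun g hg E hE => ?_⟩
  set B := weakENorm μ g p
  rcases eq_or_ne (μ E) 0 with hE0 | hE0
  · simp [Measure.restrict_eq_zero.2 hE0]
  rcases eq_or_ne B 0 with hB0 | hB0
  · have hg0 : ∫⁻ x in E, g x ∂μ = 0 := lintegral_eq_zero_of_ae_eq_zero
      (ae_restrict_of_ae (ae_eq_zero_of_weakENorm_eq_zero hp0 hB0))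
    simp [hg0]
  have hE1 : μ E ^ (1 - 1 / p) ≠ 0 := by simp [hE0, hE]
  rcases eq_or_ne B ⊤ with hBtop | hBtop
  · rw [hBtop, ENNReal.mul_top (by simp), ENNReal.top_mul hE1]
    exact le_top
  calc ∫⁻ x in E, g x ∂μ
      ≤ B * μ E ^ (-(1 / p)) * μ E + C * B ^ p * (B * μ E ^ (-(1 / p))) ^ (1 - p) := by
        apply hle g hg
        · simp [hB0, hE0, hE]
        · exact ENNReal.mul_ne_top hBtop (by simp [hE0, hE])
    _ = B * (μ E ^ (-(1 / p)) * μ E ^ (1 : ℝ)) +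
          C * (B ^ p * B ^ (1 - p)) * μ E ^ (-(1 / p) * (1 - p)) := by
        rw [ENNReal.mul_rpow_of_ne_top hBtop (by simp [hE0, hE]), ← ENNReal.rpow_mul,
          ENNReal.rpow_one]
        ring
    _ = (1 + C) * B * μ E ^ (1 - 1 / p) := by
        rw [← ENNReal.rpow_add _ _ hE0 hE, ← ENNReal.rpow_add _ _ hB0 hBtop, add_sub_cancel,
          ENNReal.rpow_one, neg_add_eq_sub, show -(1 / p) * (1 - p) = 1 - 1 / p by field_simp; ring]
        ring

theorem mul_measure_rpow_le_of_forall_subset [SigmaFinite μ] {t B : ℝ≥0∞} {s : ℝ} (ht : t ≠ ⊤)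
    {E : Set X} (hE : MeasurableSet E)
    (h : ∀ F ⊆ E, MeasurableSet F → μ F ≠ ⊤ → t * μ F ^ s ≤ B) : t * μ E ^ s ≤ B := by
  have hlim : Filter.Tendsto (fun j => t * μ (E ∩ spanningSets μ j) ^ s) Filter.atTop
      (nhds (t * μ E ^ s)) := by
    refine ENNReal.Tendsto.const_mul (Filter.Tendsto.ennrpow_const s ?_) (Or.inr ht)
    have hE_eq : ⋃ j, E ∩ spanningSets μ j = E := by
      rw [← inter_iUnion, iUnion_spanningSets, inter_univ]
    conv => rhs; rw [← hE_eq]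
    exact tendsto_measure_iUnion_atTop fun i j hij =>
      inter_subset_inter_right E (monotone_spanningSets μ hij)
  exact le_of_tendsto' hlim fun j => h _ inter_subset_left
    (hE.inter (measurableSet_spanningSets μ j))
    ((measure_mono inter_subset_right).trans_lt (measure_spanningSets_lt_top μ j)).ne

theorem exists_weakENorm_lintegral_le {Y : Type*} [MeasurableSpace Y] {ν : Measure Y}
    [SigmaFinite μ] [SFinite ν] (hp : 1 < p) :
    ∃ C : ℝ≥0∞, C ≠ ⊤ ∧ ∀ (K : X → Y → ℝ≥0∞) (A : ℝ≥0∞), Measurable (Function.uncurry K) →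
      (∀ᵐ y ∂ν, weakENorm μ (K · y) p ≤ A) → ∀ G : Y → ℝ≥0∞, Measurable G →
        weakENorm μ (fun x => ∫⁻ y, K x y * G y ∂ν) p ≤ C * A * ∫⁻ y, G y ∂ν := by
  obtain ⟨C, hC, kolmogorov⟩ := exists_setLIntegral_le_weakENorm (μ := μ) hp
  refine ⟨C, hC, fun K A hK hA G hG => iSup_le fun t => ?_⟩
  rcases eq_or_ne t ⊤ with rfl | ht
  · simp [show 0 < p by linarith]
  have hKG : Measurable (fun z : X × Y => K z.1 z.2 * G z.2) := hK.mul (hG.comp measurable_snd)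
  refine mul_measure_rpow_le_of_forall_subset ht
    (measurableSet_lt measurable_const hKG.lintegral_prod_right') fun F hF hFm hFtop => ?_
  rcases eq_or_ne (μ F) 0 with h0 | h0
  · simp [h0, (by linarith : 0 < p)]
  refine (ENNReal.mul_le_mul_iff_left (c := μ F ^ (1 - 1 / p)) (by simp [h0, hFtop])
    (by simp [h0, hFtop])).1 ?_
  calc t * μ F ^ (1 / p) * μ F ^ (1 - 1 / p) = ∫⁻ _ in F, t ∂μ := by
        rw [mul_assoc, ← ENNReal.rpow_add _ _ h0 hFtop, add_sub_cancel, ENNReal.rpow_one,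
          setLIntegral_const]
    _ ≤ ∫⁻ x in F, ∫⁻ y, K x y * G y ∂ν ∂μ :=
        setLIntegral_mono' hFm fun x hx => (hF hx).le
    _ = ∫⁻ y, (∫⁻ x in F, K x y ∂μ) * G y ∂ν := by
        rw [lintegral_lintegral_swap hKG.aemeasurable]
        simp_rw [lintegral_mul_const _ (hK.of_uncurry_right)]
    _ ≤ ∫⁻ y, C * A * μ F ^ (1 - 1 / p) * G y ∂ν := by
        refine lintegral_mono_ae (hA.mono fun y hy => ?_)
        gcongr
        refine (kolmogorov _ hK.of_uncurry_right F hFtop).trans ?_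
        gcongr
    _ = C * A * (∫⁻ y, G y ∂ν) * μ F ^ (1 - 1 / p) := by
        rw [lintegral_const_mul _ hG]
        ring

theorem measure_prod_lt_prod_le {ι : Type*} [Fintype ι] (hp : 0 < p) (g : ι → X → ℝ≥0∞)
    {l : ℝ≥0∞} (hl0 : l ≠ 0) (hl : l ≠ ⊤) (hzero : ∀ i, weakENorm μ (g i) p ≠ 0)
    (htop : ∀ i, weakENorm μ (g i) p ≠ ⊤) :
    μ {x | ∏ i, l * weakENorm μ (g i) p < ∏ i, g i x} ≤ Fintype.card ι * l ^ (-p) := by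
  have hcover : {x | ∏ i, l * weakENorm μ (g i) p < ∏ i, g i x} ⊆
      ⋃ i, {x | l * weakENorm μ (g i) p < g i x} := by
    refine compl_subset_compl.1 fun x hx => ?_
    simp only [compl_iUnion, mem_iInter, mem_compl_iff, Set.mem_ofPred_eq, not_lt] at hx ⊢
    exact Finset.prod_le_prod' fun i _ => hx i
  calc μ {x | ∏ i, l * weakENorm μ (g i) p < ∏ i, g i x}
      ≤ ∑ i, μ {x | l * weakENorm μ (g i) p < g i x} :=
        (measure_mono hcover).trans (measure_iUnion_fintype_le _ _)
    _ ≤ ∑ _i : ι, l ^ (-p) := by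
        gcongr with i
        refine (measure_lt_le_weakENorm_div_rpow hp (mul_ne_zero hl0 (hzero i))
          (ENNReal.mul_ne_top hl (htop i))).trans_eq ?_
        rw [ENNReal.rpow_neg, ← ENNReal.inv_rpow, div_eq_mul_inv,
          ENNReal.mul_inv (Or.inl hl0) (Or.inl hl), mul_left_comm,
          ENNReal.mul_inv_cancel (hzero i) (htop i), mul_one]
    _ = Fintype.card ι * l ^ (-p) := by simp

theorem mul_measure_lt_prod_rpow_le {ι : Type*} [Fintype ι] [Nonempty ι] (hp : 0 < p)
    (g : ι → X → ℝ≥0∞) (hzero : ∀ i, weakENorm μ (g i) p ≠ 0) (htop : ∀ i, weakENorm μ (g i) p ≠ ⊤)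
    {t : ℝ≥0∞} (ht0 : t ≠ 0) (ht : t ≠ ⊤) :
    t * μ {x | t < ∏ i, g i x} ^ ((Fintype.card ι : ℝ) / p) ≤
      Fintype.card ι ^ ((Fintype.card ι : ℝ) / p) * ∏ i, weakENorm μ (g i) p := by
  set m : ℝ := (Fintype.card ι : ℝ) with hm_def
  have hm : 0 < m := by simp [hm_def, Fintype.card_pos]
  set N : ι → ℝ≥0∞ := fun i => weakENorm μ (g i) p
  have hP0 : ∏ i, N i ≠ 0 := Finset.prod_ne_zero_iff.2 fun i _ => hzero i
  have hP : ∏ i, N i ≠ ⊤ := ENNReal.prod_ne_top fun i _ => htop i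
  set l := (t / ∏ i, N i) ^ (1 / m) with hl_def
  have hlm : l ^ m = t / ∏ i, N i := by
    rw [hl_def, ← ENNReal.rpow_mul, one_div_mul_cancel hm.ne', ENNReal.rpow_one]
  have hl0 : l ≠ 0 :=
    (ENNReal.rpow_pos (ENNReal.div_pos ht0 hP) (ENNReal.div_ne_top ht hP0)).ne'
  have hl : l ≠ ⊤ := ENNReal.rpow_ne_top_of_nonneg (by positivity) (ENNReal.div_ne_top ht hP0)
  have measure_le : μ {x | t < ∏ i, g i x} ≤ Fintype.card ι * l ^ (-p) := by
    have hprod : ∏ i, l * N i = t := by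
      rw [Finset.prod_mul_distrib, Finset.prod_const, Finset.card_univ, ← ENNReal.rpow_natCast,
        hlm, ENNReal.div_mul_cancel hP0 hP]
    exact hprod ▸ measure_prod_lt_prod_le hp g hl0 hl hzero htop
  calc t * μ {x | t < ∏ i, g i x} ^ (m / p)
      ≤ t * (Fintype.card ι * l ^ (-p)) ^ (m / p) := by gcongr
    _ = Fintype.card ι ^ (m / p) * (t * (l ^ m)⁻¹) := by
        rw [ENNReal.mul_rpow_of_nonneg _ _ (by positivity), ← ENNReal.rpow_mul,
          neg_mul, mul_div_cancel₀ _ hp.ne', ENNReal.rpow_neg]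
        ring
    _ = Fintype.card ι ^ (m / p) * ∏ i, N i := by
        rw [hlm, ENNReal.inv_div (Or.inl hP) (Or.inl hP0), ENNReal.mul_div_cancel ht0 ht]

/-- Weak-type Hölder inequality with equal exponents. -/
theorem weakENorm_prod_le {ι : Type*} [Fintype ι] [Nonempty ι] (hp : 0 < p) (g : ι → X → ℝ≥0∞) :
    weakENorm μ (fun x => ∏ i, g i x) (p / Fintype.card ι) ≤
      Fintype.card ι ^ ((Fintype.card ι : ℝ) / p) * ∏ i, weakENorm μ (g i) p := by
  have hm : 0 < (Fintype.card ι : ℝ) := by simp [Fintype.card_pos]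
  by_cases hzero : ∃ i, weakENorm μ (g i) p = 0
  · obtain ⟨i, hi⟩ := hzero
    have hprod : ∀ᵐ x ∂μ, ∏ i, g i x ≤ 0 := (ae_eq_zero_of_weakENorm_eq_zero hp hi).mono
      fun x hx => (Finset.prod_eq_zero (Finset.mem_univ i) hx).le
    refine (weakENorm_mono_ae (div_pos hp hm) hprod).trans ?_
    simp [weakENorm, ENNReal.zero_rpow_of_pos (div_pos hm hp)]
  push Not at hzero
  by_cases htop : ∃ i, weakENorm μ (g i) p = ⊤
  · obtain ⟨i, hi⟩ := htop
    have hprod : ∏ i, weakENorm μ (g i) p = ⊤ :=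
      WithTop.prod_eq_top (Finset.mem_univ i) hi fun j _ => hzero j
    rw [hprod, ENNReal.mul_top]
    · exact le_top
    · simp [hp]
  push Not at htop
  refine iSup_le fun t => ?_
  rcases eq_or_ne t 0 with rfl | ht0
  · simp
  rcases eq_or_ne t ⊤ with rfl | ht
  · simp [hp, hm]
  rw [one_div_div]
  exact mul_measure_lt_prod_rpow_le hp g hzero htop ht0 ht

theorem exists_weakENorm_tsum_lintegral_mul_prod_le {Y : Type*} [MeasurableSpace Y]
    {ν : Measure Y} [SigmaFinite μ] [SigmaFinite ν] {m : ℕ} [NeZero m] (hp : 1 < p)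
    {K : Fin m → X → Y → ℝ≥0∞} (hK : ∀ i, Measurable (Function.uncurry (K i)))
    {A : ℝ≥0∞} (hA : A ≠ ⊤) (test : ∀ i, ∀ᵐ y ∂ν, weakENorm μ (K i · y) p ≤ A)
    {φ : Fin m → Y → ℝ≥0∞} (hφ : ∀ i, Measurable (φ i))
    {κ : X → (Fin m → Y) → ℝ≥0∞} {c : ℝ≥0∞} (hc : c ≠ ⊤)
    (hκ : ∀ᵐ x ∂μ, ∀ᵐ y ∂Measure.pi fun _ => ν, κ x y ≤ c * ∏ i, K i x (y i) * φ i (y i))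
    {ι : Fin m → Type*} [∀ i, Countable (ι i)] :
    ∃ C : ℝ≥0∞, C ≠ ⊤ ∧ ∀ (r : ℝ), 1 ≤ r → ∀ f : ∀ i, ι i → Y → ℝ≥0∞,
      (∀ i k, Measurable (f i k)) →
        weakENorm μ (fun x => (∑' k : ∀ i, ι i,
            (∫⁻ y, κ x y * ∏ i, f i (k i) (y i) ∂Measure.pi fun _ => ν) ^ r) ^ (1 / r)) (p / m) ≤
          C * ∏ i, ∫⁻ y, φ i y * (∑' k, f i k y ^ r) ^ (1 / r) ∂ν := by
  obtain ⟨C₀, hC₀, strong⟩ := exists_weakENorm_lintegral_le (μ := μ) (ν := ν) hp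
  have hp0 : 0 < p := by linarith
  have hm : (0 : ℝ) < m := by exact_mod_cast Nat.pos_of_neZero m
  refine ⟨c * m ^ (m / p) * (C₀ * A) ^ m, by finiteness, fun r hr f hf => ?_⟩
  set G : Fin m → Y → ℝ≥0∞ := fun i y => φ i y * (∑' k, f i k y ^ r) ^ (1 / r)
  have hG (i : Fin m) : Measurable (G i) :=
    (hφ i).mul ((Measurable.tsum fun k => (hf i k).pow_const r).pow_const _)
  calc _ ≤ weakENorm μ (fun x => c * ∏ i, ∫⁻ y, K i x y * G i y ∂ν) (p / m) := by
        refine weakENorm_mono_ae (by positivity) (hκ.mono fun x hx => ?_)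
        have hKφ (i : Fin m) : Measurable fun y => K i x y * φ i y :=
          (hK i).of_uncurry_left.mul (hφ i)
        simpa only [mul_assoc] using tsum_lintegral_mul_prod_rpow_le hr hKφ hx hf
    _ ≤ c * (m ^ (m / p) * ∏ i, weakENorm μ (fun x => ∫⁻ y, K i x y * G i y ∂ν) p) := by
        refine (weakENorm_const_mul_le (by positivity) hc).trans ?_
        gcongr
        simpa using weakENorm_prod_le (μ := μ) hp0 fun i x => ∫⁻ y, K i x y * G i y ∂ν
    _ ≤ c * (m ^ (m / p) * ∏ i, C₀ * A * ∫⁻ y, G i y ∂ν) := by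
        gcongr with i
        exact strong (K i) A (hK i) (test i) (G i) (hG i)
    _ = _ := by
        rw [Finset.prod_mul_distrib, Finset.prod_const, Finset.card_univ, Fintype.card_fin]
        ring

end WeakNorm

/-- Quantitative `A_∞` condition for a measure `ω` against a reference measure `μ`, tested on
closed balls (which are cubes for the sup norm): `(μ E / μ B)^P ≤ C ω E / ω B` for `E ⊆ B`. -/
structure IsAInftyMeasure {V : Type*} [PseudoMetricSpace V] [MeasurableSpace V]
    (μ ω : Measure V) : Prop where
  absolutelyContinuous : ω ≪ μ
  closedBall_ne_top : ∀ x r, ω (Metric.closedBall x r) ≠ ⊤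
  exists_comparison : ∃ P : ℝ, 0 < P ∧ ∃ C : ℝ≥0∞, C ≠ ⊤ ∧ ∀ x r, 0 < r →
    ∀ E ⊆ Metric.closedBall x r, MeasurableSet E →
      ω (Metric.closedBall x r) * μ E ^ P ≤ C * μ (Metric.closedBall x r) ^ P * ω E

theorem exists_pow_mul_le_one_and_pow_le_rpow {θ A : ℝ≥0∞} (hθ : θ < 1) (hA : 1 < A)
    (hA_top : A ≠ ⊤) :
    ∃ η : ℝ, 0 < η ∧ ∃ K : ℝ≥0∞, K ≠ ⊤ ∧ ∀ t ≤ 1, t ≠ 0 →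
      ∃ N : ℕ, A ^ N * t ≤ 1 ∧ θ ^ N ≤ K * t ^ η := by
  classical
  obtain ⟨j, hj⟩ : ∃ j : ℕ, θ ^ j < A⁻¹ :=
    ((ENNReal.tendsto_pow_atTop_nhds_zero_of_lt_one hθ).eventually_lt_const
      (ENNReal.inv_pos.2 hA_top)).exists
  have hj0 : j ≠ 0 := by
    rintro rfl
    exact hj.not_ge (by simpa using hA.le)
  refine ⟨1 / j, by positivity, A ^ (1 / j : ℝ), by finiteness, fun t ht1 ht0 => ?_⟩
  have hex : ∃ k : ℕ, t⁻¹ < A ^ k :=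
    ((ENNReal.tendsto_pow_atTop_nhds_top_iff.2 hA).eventually_const_lt
      (ENNReal.inv_lt_top.2 (pos_iff_ne_zero.2 ht0))).exists
  obtain ⟨N, hN⟩ : ∃ N, Nat.find hex = N + 1 := by
    refine Nat.exists_eq_add_one.2 (Nat.find_pos hex |>.2 ?_)
    simpa using ht1
  have lower : A ^ N ≤ t⁻¹ := not_lt.1 (Nat.find_min hex (by omega))
  have upper : t⁻¹ < A ^ (N + 1) := hN ▸ Nat.find_spec hex
  refine ⟨N, ?_, ?_⟩
  · rw [← ENNReal.le_inv_iff_mul_le]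
    exact lower
  · have hpow : (θ ^ N) ^ (j : ℝ) ≤ A * t := calc
      (θ ^ N) ^ (j : ℝ) = (θ ^ j) ^ N := by
        rw [ENNReal.rpow_natCast, ← pow_mul, ← pow_mul, mul_comm]
      _ ≤ A⁻¹ ^ N := by gcongr
      _ = A * (A ^ (N + 1))⁻¹ := by
        rw [← ENNReal.inv_pow, pow_succ', ENNReal.mul_inv (by simp [hA_top]) (by simp [hA_top]),
          ← mul_assoc, ENNReal.mul_inv_cancel (by positivity) hA_top, one_mul]
      _ ≤ A * t := by
        gcongr
        exact ENNReal.inv_le_iff_inv_le.1 upper.le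
    rw [← ENNReal.mul_rpow_of_nonneg _ _ (by positivity), one_div,
      ENNReal.le_rpow_inv_iff (by positivity)]
    exact hpow

theorem measure_le_two_mul_measure_sdiff {X : Type*} [MeasurableSpace X] {μ : Measure X}
    {B E : Set X} (hE : MeasurableSet E) (hB : μ B ≠ ⊤) (h : 2 * μ (B ∩ E) ≤ μ B) :
    μ B ≤ 2 * μ (B \ E) := by
  rw [← measure_inter_add_sdiff (μ := μ) B hE, two_mul] at h ⊢
  gcongr ?_ + _
  exact (ENNReal.add_le_add_iff_left (measure_ne_top_of_subset inter_subset_left hB)).1 h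

theorem measure_biUnion_le_mul_measure_biUnion {X ι : Type*} [MeasurableSpace X] {μ : Measure X}
    {U : Set ι} (hU : U.Countable) {A B : ι → Set X} (hB : ∀ z ∈ U, MeasurableSet (B z))
    (hdisj : U.PairwiseDisjoint B) {c : ℝ≥0∞} (hAB : ∀ z ∈ U, μ (A z) ≤ c * μ (B z)) :
    μ (⋃ z ∈ U, A z) ≤ c * μ (⋃ z ∈ U, B z) := by
  rw [measure_biUnion hU hdisj hB, ← ENNReal.tsum_mul_left]
  exact (measure_biUnion_le μ hU A).trans (ENNReal.tsum_le_tsum fun z => hAB z z.2)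

section AInfty

open Metric Module

variable {V : Type*} [NormedAddCommGroup V] [NormedSpace ℝ V] [FiniteDimensional ℝ V]
  [MeasurableSpace V] [BorelSpace V] {μ ω : Measure V} [μ.IsAddHaarMeasure]

theorem addHaar_closedBall_mul_eq (x y : V) {c r : ℝ} (hc : 0 ≤ c) (hr : 0 ≤ r) :
    μ (closedBall x (c * r)) = ENNReal.ofReal c ^ finrank ℝ V * μ (closedBall y r) := by
  rw [μ.addHaar_closedBall_mul x hc hr, ENNReal.ofReal_pow hc, μ.addHaar_closedBall_center y]

theorem exists_closedBall_measure_inter_bounds {E : Set V} {ρ : ℝ} (hρ : 0 < ρ)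
    (hE : 2 * μ E ≤ μ (closedBall 0 ρ)) {z : V}
    (hz : Filter.Tendsto (fun r => μ (E ∩ closedBall z r) / μ (closedBall z r))
      (nhdsWithin 0 (Ioi 0)) (nhds 1)) :
    ∃ r, 0 < r ∧ r ≤ ρ ∧ 2 * μ (closedBall z r ∩ E) ≤ μ (closedBall z r) ∧
      μ (closedBall z r) ≤ 2 ^ (finrank ℝ V + 1) * μ (closedBall z r ∩ E) := by
  classical
  have hex : ∃ j : ℕ, μ (closedBall z (ρ / 2 ^ j)) < 2 * μ (closedBall z (ρ / 2 ^ j) ∩ E) := by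
    have hlim : Filter.Tendsto (fun j : ℕ => ρ / 2 ^ j) Filter.atTop (nhdsWithin 0 (Ioi 0)) := by
      refine tendsto_nhdsWithin_iff.2 ⟨?_, Filter.Eventually.of_forall fun j => ?_⟩
      · simpa [div_eq_mul_inv] using
          (tendsto_pow_atTop_nhds_zero_of_lt_one (r := (2⁻¹ : ℝ)) (by norm_num)
            (by norm_num)).const_mul ρ
      · exact mem_Ioi.2 (by positivity)
    obtain ⟨j, hj⟩ := ((hz.comp hlim).eventually_const_lt
      (ENNReal.inv_lt_one.2 ENNReal.one_lt_two)).exists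
    refine ⟨j, ?_⟩
    rw [Function.comp_apply, ENNReal.lt_div_iff_mul_lt (Or.inl
      (measure_closedBall_pos μ z (by positivity)).ne') (Or.inl measure_closedBall_lt_top.ne),
      ← ENNReal.div_eq_inv_mul, inter_comm] at hj
    exact (ENNReal.div_lt_iff (by simp) (by simp)).1 hj |>.trans_eq (mul_comm _ _)
  obtain ⟨i, hi⟩ : ∃ i, Nat.find hex = i + 1 := by
    refine Nat.exists_eq_add_one.2 ((Nat.find_pos hex).2 (not_lt.2 ?_))
    rw [pow_zero, div_one, μ.addHaar_closedBall_center]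
    exact le_trans (by gcongr; exact inter_subset_right) hE
  have hlarge := hi ▸ Nat.find_spec hex
  have hsmall := not_lt.1 (Nat.find_min hex (m := i) (by omega))
  refine ⟨ρ / 2 ^ i, by positivity, div_le_self hρ.le (one_le_pow₀ one_le_two), hsmall, ?_⟩
  calc μ (closedBall z (ρ / 2 ^ i))
      = 2 ^ finrank ℝ V * μ (closedBall z (ρ / 2 ^ (i + 1))) := by
        rw [show ρ / 2 ^ i = 2 * (ρ / 2 ^ (i + 1)) by field_simp; ring,
          addHaar_closedBall_mul_eq z z zero_le_two (by positivity), ENNReal.ofReal_ofNat]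
    _ ≤ 2 ^ finrank ℝ V * (2 * μ (closedBall z (ρ / 2 ^ i) ∩ E)) := by
        gcongr
        refine hlarge.le.trans ?_
        gcongr
        · norm_num
        · omega
    _ = _ := by ring

theorem exists_disjoint_closedBall_cover {E : Set V} (hEm : MeasurableSet E) {ρ : ℝ} (hρ : 0 < ρ)
    (hE : 2 * μ E ≤ μ (closedBall 0 ρ)) :
    ∃ (U : Set V) (r : V → ℝ), U ⊆ E ∧ U.Countable ∧
      U.PairwiseDisjoint (fun z => closedBall z (r z)) ∧
      (∀ z ∈ U, 0 < r z ∧ r z ≤ ρ ∧ 2 * μ (closedBall z (r z) ∩ E) ≤ μ (closedBall z (r z)) ∧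
        μ (closedBall z (r z)) ≤ 2 ^ (finrank ℝ V + 1) * μ (closedBall z (r z) ∩ E)) ∧
      ∀ᵐ z ∂μ, z ∈ E → z ∈ ⋃ b ∈ U, closedBall b (5 * r b) := by
  set T : Set V := {z ∈ E | Filter.Tendsto
    (fun r => μ (E ∩ closedBall z r) / μ (closedBall z r)) (nhdsWithin 0 (Ioi 0)) (nhds 1)}
  choose! r hr using fun z (hz : z ∈ T) => exists_closedBall_measure_inter_bounds hρ hE hz.2
  obtain ⟨U, hUT, hdisj, hcover⟩ :=
    Vitali.exists_disjoint_subfamily_covering_enlargement_closedBall T id r ρ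
      (fun z hz => (hr z hz).2.1) 5 (by norm_num)
  refine ⟨U, r, fun z hz => (hUT hz).1, ?_, hdisj, fun z hz => hr z (hUT hz), ?_⟩
  · refine hdisj.countable_of_nonempty_interior fun z hz => ⟨z, ?_⟩
    exact ball_subset_interior_closedBall (mem_ball_self (hr z (hUT hz)).1)
  · filter_upwards [(ae_restrict_iff' hEm).1 (Besicovitch.ae_tendsto_measure_inter_div μ E)]
      with z hz hzE
    have hzT : z ∈ T := ⟨hzE, hz hzE⟩
    obtain ⟨b, hb, hsub⟩ := hcover z hzT
    exact mem_biUnion hb (hsub (mem_closedBall_self (hr z hzT).1.le))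

/-- `F` is the union of the fivefold dilates of balls on which `E` has density about one half. -/
theorem exists_measure_le_one_sub_inv_mul (hac : ω ≪ μ) (hfin : ∀ x r, ω (closedBall x r) ≠ ⊤)
    {C : ℝ≥0∞} (hC0 : C ≠ 0)
    (hC : ∀ x r, 0 < r → ∀ E ⊆ closedBall x r, MeasurableSet E →
      μ (closedBall x r) ≤ 2 * μ E → ω (closedBall x (5 * r)) ≤ C * ω E)
    {x : V} {s ρ : ℝ} (hρ : 0 < ρ) {E : Set V} (hEm : MeasurableSet E)
    (hEs : E ⊆ closedBall x s) (hE : 2 * μ E ≤ μ (closedBall 0 ρ)) :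
    ∃ F ⊆ closedBall x (s + 5 * ρ), MeasurableSet F ∧
      μ F ≤ 2 * 10 ^ finrank ℝ V * μ E ∧ ω E ≤ (1 - C⁻¹) * ω F := by
  obtain ⟨U, r, hUE, hU, hdisj, hr, hcover⟩ := exists_disjoint_closedBall_cover hEm hρ hE
  set F := ⋃ z ∈ U, closedBall z (5 * r z)
  have hFs : F ⊆ closedBall x (s + 5 * ρ) := iUnion₂_subset fun z hz =>
    closedBall_subset_closedBall' (by linarith [hr z hz, mem_closedBall.1 (hEs (hUE hz))])
  have hFω : ω F ≠ ⊤ := ((measure_mono hFs).trans_lt (hfin _ _).lt_top).ne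
  refine ⟨F, hFs, MeasurableSet.biUnion hU fun z _ => measurableSet_closedBall, ?_, ?_⟩
  · refine (measure_biUnion_le_mul_measure_biUnion (c := 2 * 10 ^ finrank ℝ V)
      (B := fun z => closedBall z (r z) ∩ E) hU (fun z _ => measurableSet_closedBall.inter hEm)
      (hdisj.mono fun z => inter_subset_left) fun z hz => ?_).trans ?_
    · obtain ⟨hr0, -, -, hle⟩ := hr z hz
      rw [addHaar_closedBall_mul_eq z z (by norm_num) hr0.le, ENNReal.ofReal_ofNat]
      refine (mul_le_mul_right hle _).trans_eq ?_
      rw [show (10 : ℝ≥0∞) = 5 * 2 by norm_num, mul_pow]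
      ring
    · gcongr
      exact iUnion₂_subset fun z _ => inter_subset_right
  · have hdiff : ω F ≤ C * ω (F \ E) := by
      refine (measure_biUnion_le_mul_measure_biUnion (c := C)
        (B := fun z => closedBall z (r z) \ E) hU (fun z _ => measurableSet_closedBall.diff hEm)
        (hdisj.mono fun z => sdiff_subset) fun z hz => ?_).trans ?_
      · obtain ⟨hr0, -, hle, -⟩ := hr z hz
        exact hC _ _ hr0 _ sdiff_subset (measurableSet_closedBall.diff hEm)
          (measure_le_two_mul_measure_sdiff hEm measure_closedBall_lt_top.ne hle)
      · gcongr
        refine iUnion₂_subset fun z hz => sdiff_subset_sdiff_left ?_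
        exact (closedBall_subset_closedBall (by linarith [hr z hz])).trans
          (subset_biUnion_of_mem (u := fun z => closedBall z (5 * r z)) hz)
    calc ω E ≤ ω (F ∩ E) := measure_mono_ae <| by
          filter_upwards [hac.ae_le hcover] with z hz hzE using ⟨hz hzE, hzE⟩
      _ ≤ ω F - C⁻¹ * ω F := by
          refine ENNReal.le_sub_of_add_le_right
            (ENNReal.mul_ne_top (ENNReal.inv_ne_top.2 hC0) hFω) ?_
          conv_rhs => rw [← measure_inter_add_sdiff (μ := ω) F hEm]
          gcongr
          rw [← ENNReal.div_eq_inv_mul]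
          exact ENNReal.div_le_of_le_mul' hdiff
      _ = (1 - C⁻¹) * ω F := by rw [ENNReal.sub_mul fun _ _ => hFω, one_mul]

theorem measure_le_one_sub_inv_pow_mul (hac : ω ≪ μ) (hfin : ∀ x r, ω (closedBall x r) ≠ ⊤)
    {C : ℝ≥0∞} (hC0 : C ≠ 0)
    (hC : ∀ x r, 0 < r → ∀ E ⊆ closedBall x r, MeasurableSet E →
      μ (closedBall x r) ≤ 2 * μ E → ω (closedBall x (5 * r)) ≤ C * ω E)
    (N : ℕ) {x : V} {s r : ℝ} (hr : 0 < r) {E : Set V} (hEm : MeasurableSet E)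
    (hEs : E ⊆ closedBall x s)
    (hE : (2 * 20 ^ finrank ℝ V) ^ N * μ E ≤ μ (closedBall 0 r)) :
    ω E ≤ (1 - C⁻¹) ^ N * ω (closedBall x (s + 2 * r)) := by
  induction N generalizing s r E with
  | zero =>
    rw [pow_zero, one_mul]
    exact measure_mono (hEs.trans (closedBall_subset_closedBall (by linarith)))
  | succ N ih =>
    set d := finrank ℝ V
    have hsmall : 2 * μ E ≤ μ (closedBall 0 (r / 5)) := by
      refine (ENNReal.mul_le_mul_iff_right (a := 5 ^ d) (by positivity) (by finiteness)).1 ?_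
      calc 5 ^ d * (2 * μ E) = 1 * (2 * 5 ^ d) * μ E := by ring
        _ ≤ (2 * 20 ^ d) ^ N * (2 * 20 ^ d) * μ E := by
            gcongr
            · exact one_le_pow₀ (one_le_mul one_le_two (one_le_pow₀ (by norm_num)))
            · norm_num
        _ ≤ μ (closedBall 0 (5 * (r / 5))) := by
            rw [← pow_succ, mul_div_cancel₀ r (by norm_num)]
            exact hE
        _ = 5 ^ d * μ (closedBall 0 (r / 5)) := by
            rw [addHaar_closedBall_mul_eq 0 0 (by norm_num) (by positivity), ENNReal.ofReal_ofNat]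
    obtain ⟨F, hFs, hFm, hFμ, hEF⟩ :=
      exists_measure_le_one_sub_inv_mul hac hfin hC0 hC (by positivity) hEm hEs hsmall
    have hF : (2 * 20 ^ d) ^ N * μ F ≤ μ (closedBall 0 (r / 2)) := by
      refine (ENNReal.mul_le_mul_iff_right (a := 2 ^ d) (by positivity) (by finiteness)).1 ?_
      calc 2 ^ d * ((2 * 20 ^ d) ^ N * μ F)
          ≤ 2 ^ d * ((2 * 20 ^ d) ^ N * (2 * 10 ^ d * μ E)) := by gcongr
        _ = (2 * 20 ^ d) ^ N * (2 * (2 ^ d * 10 ^ d)) * μ E := by ring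
        _ ≤ μ (closedBall 0 (2 * (r / 2))) := by
            rw [← mul_pow, show (2 * 10 : ℝ≥0∞) = 20 by norm_num, ← pow_succ,
              mul_div_cancel₀ r two_ne_zero]
            exact hE
        _ = 2 ^ d * μ (closedBall 0 (r / 2)) := by
            rw [addHaar_closedBall_mul_eq 0 0 zero_le_two (by positivity), ENNReal.ofReal_ofNat]
    calc ω E ≤ (1 - C⁻¹) * ω F := hEF
      _ ≤ (1 - C⁻¹) * ((1 - C⁻¹) ^ N * ω (closedBall x (s + 5 * (r / 5) + 2 * (r / 2)))) := by
          gcongr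
          exact ih (by positivity) hFm hFs hF
      _ = (1 - C⁻¹) ^ (N + 1) * ω (closedBall x (s + 2 * r)) := by
          rw [show s + 5 * (r / 5) + 2 * (r / 2) = s + 2 * r by ring, pow_succ']
          ring

namespace IsAInftyMeasure

theorem exists_closedBall_mul_le (h : IsAInftyMeasure μ ω) (c : ℝ) :
    ∃ K : ℝ≥0∞, K ≠ ⊤ ∧ ∀ x r, 0 < r → ∀ E ⊆ closedBall x r, MeasurableSet E →
      μ (closedBall x r) ≤ 2 * μ E → ω (closedBall x (c * r)) ≤ K * ω E := by
  obtain ⟨P, hP, C, hC, hcomp⟩ := h.exists_comparison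
  refine ⟨C * (ENNReal.ofReal (max c 1) ^ finrank ℝ V * 2) ^ P, by finiteness,
    fun x r hr E hE hEm hμE => ?_⟩
  have hE0 : μ E ≠ 0 := fun h0 =>
    (measure_closedBall_pos μ x hr).ne' (le_zero_iff.1 (by simpa [h0] using hμE))
  have hEtop : μ E ≠ ⊤ := ((measure_mono hE).trans_lt measure_closedBall_lt_top).ne
  have hr_le : r ≤ max c 1 * r := le_mul_of_one_le_left hr.le (le_max_right _ _)
  have hc_le : c * r ≤ max c 1 * r := by gcongr; exact le_max_left _ _
  refine (measure_mono (closedBall_subset_closedBall hc_le)).trans ?_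
  refine (ENNReal.mul_le_mul_iff_left (c := μ E ^ P) (by simp [hE0, hEtop])
    (by finiteness)).1 ?_
  calc ω (closedBall x (max c 1 * r)) * μ E ^ P
      ≤ C * μ (closedBall x (max c 1 * r)) ^ P * ω E :=
        hcomp x _ (hr.trans_le hr_le) E (hE.trans (closedBall_subset_closedBall hr_le)) hEm
    _ ≤ C * (ENNReal.ofReal (max c 1) ^ finrank ℝ V * (2 * μ E)) ^ P * ω E := by
        rw [addHaar_closedBall_mul_eq x x (by positivity) hr.le]
        gcongr
    _ = _ := by
        rw [← mul_assoc, ENNReal.mul_rpow_of_nonneg _ _ hP.le]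
        ring

theorem exists_doubling (h : IsAInftyMeasure μ ω) (c : ℝ) :
    ∃ K : ℝ≥0∞, K ≠ ⊤ ∧ ∀ x r, 0 < r → ω (closedBall x (c * r)) ≤ K * ω (closedBall x r) := by
  obtain ⟨K, hK, hle⟩ := h.exists_closedBall_mul_le c
  refine ⟨K, hK, fun x r hr => hle x r hr _ subset_rfl measurableSet_closedBall ?_⟩
  exact le_mul_of_one_le_left' one_le_two

theorem exists_measure_le_rpow (h : IsAInftyMeasure μ ω) :
    ∃ η : ℝ, 0 < η ∧ ∃ K : ℝ≥0∞, K ≠ ⊤ ∧ ∀ x r, 0 < r → ∀ E ⊆ closedBall x r, MeasurableSet E →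
      ω E ≤ K * (μ E / μ (closedBall x r)) ^ η * ω (closedBall x r) := by
  obtain ⟨C, hC, hle⟩ := h.exists_closedBall_mul_le 5
  obtain ⟨D, hD, doubling⟩ := h.exists_doubling 3
  obtain ⟨η, hη, K, hK, hpow⟩ := exists_pow_mul_le_one_and_pow_le_rpow
    (θ := 1 - (C + 1)⁻¹) (A := 2 * 20 ^ finrank ℝ V)
    (ENNReal.sub_lt_self (by simp) (by simp) (by simp [hC]))
    (ENNReal.one_lt_two.trans_le (le_mul_of_one_le_right' (one_le_pow₀ (by norm_num))))
    (by finiteness)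
  refine ⟨η, hη, K * D, by finiteness, fun x r hr E hE hEm => ?_⟩
  have hB0 : μ (closedBall x r) ≠ 0 := (measure_closedBall_pos μ x hr).ne'
  have hB : μ (closedBall x r) ≠ ⊤ := measure_closedBall_lt_top.ne
  rcases eq_or_ne (μ E) 0 with hE0 | hE0
  · simp [h.absolutelyContinuous hE0]
  obtain ⟨N, hN, hθN⟩ := hpow (μ E / μ (closedBall x r))
    (ENNReal.div_le_of_le_mul (by simpa using measure_mono hE))
    (ENNReal.div_ne_zero.2 ⟨hE0, hB⟩)
  have hNE : (2 * 20 ^ finrank ℝ V) ^ N * μ E ≤ μ (closedBall 0 r) := by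
    rw [← mul_div_assoc, ENNReal.div_le_iff hB0 hB, one_mul] at hN
    rwa [← μ.addHaar_closedBall_center x r]
  calc ω E ≤ (1 - (C + 1)⁻¹) ^ N * ω (closedBall x (r + 2 * r)) :=
        measure_le_one_sub_inv_pow_mul h.absolutelyContinuous h.closedBall_ne_top (by simp)
          (fun x r hr E hE hEm hμE => (hle x r hr E hE hEm hμE).trans (by gcongr; simp))
          N hr hEm hE hNE
    _ ≤ K * (μ E / μ (closedBall x r)) ^ η * (D * ω (closedBall x r)) := by
        gcongr
        rw [show r + 2 * r = 3 * r by ring]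
        exact doubling x r hr
    _ = _ := by ring

end IsAInftyMeasure

end AInfty

theorem measure_univ_rpow_le_lintegral_mul_lintegral {X : Type*} [MeasurableSpace X]
    {μ : Measure X} {w : X → ℝ≥0∞} (hw : Measurable w) (hw0 : ∀ᵐ x ∂μ, w x ≠ 0)
    (hw_top : ∀ᵐ x ∂μ, w x ≠ ⊤) {P : ℝ} (hP : 1 < P) :
    μ univ ^ P ≤ (∫⁻ x, w x ∂μ) * (∫⁻ x, w x ^ (-(1 / (P - 1))) ∂μ) ^ (P - 1) := by
  have hP1 : 0 < P - 1 := sub_pos.2 hP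
  have hone : μ univ = ∫⁻ x, w x ^ (1 / P) * w x ^ (-(1 / P)) ∂μ := by
    rw [← lintegral_one]
    refine lintegral_congr_ae ?_
    filter_upwards [hw0, hw_top] with x h0 ht
    rw [← ENNReal.rpow_add _ _ h0 ht, add_neg_cancel, ENNReal.rpow_zero]
  have holder := ENNReal.lintegral_mul_le_Lp_mul_Lq μ (Real.HolderConjugate.conjExponent hP)
    (hw.pow_const (1 / P)).aemeasurable (hw.pow_const (-(1 / P))).aemeasurable
  simp only [Pi.mul_apply, ← hone, ← ENNReal.rpow_mul, Real.conjExponent,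
    one_div_mul_cancel (zero_lt_one.trans hP).ne', ENNReal.rpow_one] at holder
  rw [show -(1 / P) * (P / (P - 1)) = -(1 / (P - 1)) by field_simp] at holder
  refine (ENNReal.rpow_le_rpow holder (by positivity)).trans_eq ?_
  rw [ENNReal.mul_rpow_of_nonneg _ _ (by positivity), ← ENNReal.rpow_mul, ← ENNReal.rpow_mul,
    one_div_mul_cancel (by positivity), ENNReal.rpow_one,
    show 1 / (P / (P - 1)) * P = P - 1 by field_simp]

theorem setLIntegral_ne_zero_of_ae_ne_zero {X : Type*} [MeasurableSpace X] {μ : Measure X}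
    {w : X → ℝ≥0∞} (hw : Measurable w) (hw0 : ∀ᵐ x ∂μ, w x ≠ 0) {E : Set X} (hE : μ E ≠ 0) :
    ∫⁻ x in E, w x ∂μ ≠ 0 := by
  rw [Ne, lintegral_eq_zero_iff hw]
  intro h
  have : ∀ᵐ _ ∂μ.restrict E, False := by
    filter_upwards [h, ae_restrict_of_ae hw0] with x hx hx0 using hx0 hx
  simp [Filter.eventually_false_iff_eq_bot, hE] at this

/-- A weight with values in `ℝ≥0∞`; positivity and finiteness are only required almost everywhere.
Local integrability is not part of the notion, it follows from each Muckenhoupt condition below. -/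
structure IsENNWeight {V : Type*} [MeasurableSpace V] (μ : Measure V) (w : V → ℝ≥0∞) : Prop where
  measurable : Measurable w
  ae_ne_zero : ∀ᵐ x ∂μ, w x ≠ 0
  ae_ne_top : ∀ᵐ x ∂μ, w x ≠ ⊤

namespace IsENNWeight

variable {V : Type*} [MeasurableSpace V] {μ : Measure V} {w w' : V → ℝ≥0∞}

theorem rpow (h : IsENNWeight μ w) (s : ℝ) : IsENNWeight μ fun x => w x ^ s where
  measurable := h.measurable.pow_const s
  ae_ne_zero := by
    filter_upwards [h.ae_ne_zero, h.ae_ne_top] with x h0 ht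
    simp [ENNReal.rpow_eq_zero_iff, h0, ht]
  ae_ne_top := by
    filter_upwards [h.ae_ne_zero, h.ae_ne_top] with x h0 ht
    simp [ENNReal.rpow_eq_top_iff, h0, ht]

theorem mul (h : IsENNWeight μ w) (h' : IsENNWeight μ w') : IsENNWeight μ fun x => w x * w' x where
  measurable := h.measurable.mul h'.measurable
  ae_ne_zero := by
    filter_upwards [h.ae_ne_zero, h'.ae_ne_zero] with x hx hx' using mul_ne_zero hx hx'
  ae_ne_top := by
    filter_upwards [h.ae_ne_top, h'.ae_ne_top] with x hx hx' using ENNReal.mul_ne_top hx hx'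

theorem prod {ι : Type*} [Fintype ι] {w : ι → V → ℝ≥0∞} (h : ∀ i, IsENNWeight μ (w i)) :
    IsENNWeight μ fun x => ∏ i, w i x where
  measurable := Finset.measurable_prod _ fun i _ => (h i).measurable
  ae_ne_zero := by
    filter_upwards [ae_all_iff.2 fun i => (h i).ae_ne_zero] with x hx
    exact Finset.prod_ne_zero_iff.2 fun i _ => hx i
  ae_ne_top := by
    filter_upwards [ae_all_iff.2 fun i => (h i).ae_ne_top] with x hx
    exact ENNReal.prod_ne_top fun i _ => hx i

end IsENNWeight

/-- The Muckenhoupt class `A₁` with respect to `μ`, tested on closed balls. -/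
structure IsMuckenhouptOne {V : Type*} [PseudoMetricSpace V] [MeasurableSpace V]
    (μ : Measure V) (w : V → ℝ≥0∞) : Prop extends IsENNWeight μ w where
  exists_bound : ∃ C : ℝ≥0∞, C ≠ ⊤ ∧ ∀ x r, 0 < r → ∀ᵐ z ∂μ, z ∈ Metric.closedBall x r →
    ∫⁻ y in Metric.closedBall x r, w y ∂μ ≤ C * μ (Metric.closedBall x r) * w z

/-- The Muckenhoupt class `A_P`, `1 < P`, with respect to `μ`, tested on closed balls. -/
structure IsMuckenhoupt {V : Type*} [PseudoMetricSpace V] [MeasurableSpace V]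
    (μ : Measure V) (P : ℝ) (w : V → ℝ≥0∞) : Prop extends IsENNWeight μ w where
  exists_bound : ∃ C : ℝ≥0∞, C ≠ ⊤ ∧ ∀ x r, 0 < r →
    (∫⁻ y in Metric.closedBall x r, w y ∂μ) *
      (∫⁻ y in Metric.closedBall x r, w y ^ (-(1 / (P - 1))) ∂μ) ^ (P - 1) ≤
        C * μ (Metric.closedBall x r) ^ P

section Muckenhoupt

open Metric

variable {V : Type*} [PseudoMetricSpace V] [MeasurableSpace V] {μ : Measure V} {w : V → ℝ≥0∞}
  {P : ℝ}

theorem IsMuckenhoupt.prod_rpow_inv {m : ℕ} [NeZero m] {w : Fin m → V → ℝ≥0∞} (hP : 1 < P)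
    (h : ∀ i, IsMuckenhoupt μ P (w i)) :
    IsMuckenhoupt μ P fun x => ∏ i, w i x ^ (m : ℝ)⁻¹ := by
  have hm : 0 < (m : ℝ)⁻¹ := inv_pos.2 (Nat.cast_pos.2 (NeZero.pos m))
  have hsum : ∑ _i : Fin m, (m : ℝ)⁻¹ = 1 := by simp [NeZero.ne m]
  have hne_top := ae_all_iff.2 fun i => (h i).ae_ne_top
  choose C hC hle using fun i => (h i).exists_bound
  refine ⟨.prod fun i => (h i).toIsENNWeight.rpow _,
    ∏ i, C i ^ (m : ℝ)⁻¹, ENNReal.prod_ne_top fun i _ => ENNReal.rpow_ne_top_of_nonneg hm.le (hC i),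
    fun x r hr => ?_⟩
  set B := closedBall x r
  set s := -(1 / (P - 1))
  have hint : ∫⁻ z in B, ∏ i, w i z ^ (m : ℝ)⁻¹ ∂μ ≤ ∏ i, (∫⁻ z in B, w i z ∂μ) ^ (m : ℝ)⁻¹ :=
    ENNReal.lintegral_prod_norm_pow_le _ (fun i _ => (h i).measurable.aemeasurable) hsum
      fun _ _ => hm.le
  have hdual : ∫⁻ z in B, (∏ i, w i z ^ (m : ℝ)⁻¹) ^ s ∂μ ≤
      ∏ i, (∫⁻ z in B, w i z ^ s ∂μ) ^ (m : ℝ)⁻¹ := calc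
    _ = ∫⁻ z in B, ∏ i, (w i z ^ s) ^ (m : ℝ)⁻¹ ∂μ := by
      refine lintegral_congr_ae ?_
      filter_upwards [ae_restrict_of_ae hne_top] with z ht
      rw [← ENNReal.prod_rpow_of_ne_top fun i _ => ENNReal.rpow_ne_top_of_nonneg hm.le (ht i)]
      simp only [← ENNReal.rpow_mul, mul_comm]
    _ ≤ _ := ENNReal.lintegral_prod_norm_pow_le _
      (fun i _ => ((h i).measurable.pow_const _).aemeasurable) hsum fun _ _ => hm.le
  calc _ ≤ (∏ i, (∫⁻ z in B, w i z ∂μ) ^ (m : ℝ)⁻¹) *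
          (∏ i, (∫⁻ z in B, w i z ^ s ∂μ) ^ (m : ℝ)⁻¹) ^ (P - 1) := by gcongr
    _ = ∏ i, ((∫⁻ z in B, w i z ∂μ) * (∫⁻ z in B, w i z ^ s ∂μ) ^ (P - 1)) ^ (m : ℝ)⁻¹ := by
      rw [← ENNReal.prod_rpow_of_nonneg (by linarith), ← Finset.prod_mul_distrib]
      refine Finset.prod_congr rfl fun i _ => ?_
      rw [ENNReal.mul_rpow_of_nonneg _ _ hm.le, ← ENNReal.rpow_mul, ← ENNReal.rpow_mul,
        mul_comm (P - 1)]
    _ ≤ ∏ i, (C i * μ B ^ P) ^ (m : ℝ)⁻¹ :=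
      Finset.prod_le_prod' fun i _ => ENNReal.rpow_le_rpow (hle i x r hr) hm.le
    _ = _ := by
      simp only [ENNReal.mul_rpow_of_nonneg _ _ hm.le, Finset.prod_mul_distrib, Finset.prod_const,
        Finset.card_univ, Fintype.card_fin]
      rw [← ENNReal.rpow_mul_natCast, inv_mul_cancel₀ (Nat.cast_ne_zero.2 (NeZero.ne m)),
        ENNReal.rpow_one]

theorem IsMuckenhouptOne.exists_withDensity_mul_measure_le [OpensMeasurableSpace V]
    (h : IsMuckenhouptOne μ w) :
    ∃ C : ℝ≥0∞, C ≠ ⊤ ∧ ∀ x r, 0 < r → ∀ E ⊆ closedBall x r, MeasurableSet E →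
      μ.withDensity w (closedBall x r) * μ E ≤
        C * μ (closedBall x r) * μ.withDensity w E := by
  obtain ⟨C, hC, hle⟩ := h.exists_bound
  refine ⟨C, hC, fun x r hr E hE hEm => ?_⟩
  rw [withDensity_apply _ measurableSet_closedBall, withDensity_apply _ hEm,
    ← lintegral_const_mul _ h.measurable, ← setLIntegral_const]
  refine lintegral_mono_ae ?_
  filter_upwards [ae_restrict_of_ae (hle x r hr), ae_restrict_mem hEm] with z hz hzE
  exact hz (hE hzE)

variable [ProperSpace V] [μ.IsOpenPosMeasure] [IsFiniteMeasureOnCompacts μ]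

theorem IsMuckenhoupt.setLIntegral_closedBall_ne_top (h : IsMuckenhoupt μ P w)
    (hP : 1 < P) {x : V} {r : ℝ} (hr : 0 < r) : ∫⁻ z in closedBall x r, w z ∂μ ≠ ⊤ := by
  obtain ⟨C, hC, hle⟩ := h.exists_bound
  have hdual : ∫⁻ z in closedBall x r, w z ^ (-(1 / (P - 1))) ∂μ ≠ 0 :=
    setLIntegral_ne_zero_of_ae_ne_zero (h.measurable.pow_const _)
      (h.toIsENNWeight.rpow _).ae_ne_zero (measure_closedBall_pos μ x hr).ne'
  intro htop
  have hbound := hle x r hr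
  have hpow : (∫⁻ z in closedBall x r, w z ^ (-(1 / (P - 1))) ∂μ) ^ (P - 1) ≠ 0 := by
    simp only [Ne, ENNReal.rpow_eq_zero_iff_of_pos (sub_pos.2 hP), hdual, not_false_eq_true]
  rw [htop, ENNReal.top_mul hpow, top_le_iff] at hbound
  exact absurd hbound (ENNReal.mul_ne_top hC
    (ENNReal.rpow_ne_top_of_nonneg (by linarith) measure_closedBall_lt_top.ne))

theorem IsMuckenhouptOne.setLIntegral_closedBall_ne_top (h : IsMuckenhouptOne μ w)
    {x : V} {r : ℝ} (hr : 0 < r) : ∫⁻ z in closedBall x r, w z ∂μ ≠ ⊤ := by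
  obtain ⟨C, hC, hle⟩ := h.exists_bound
  have hfreq : ∃ᵐ z ∂μ, z ∈ closedBall x r := by
    rw [frequently_ae_mem_iff]
    exact (measure_closedBall_pos μ x hr).ne'
  obtain ⟨z, hzB, hz, hz_top⟩ := (hfreq.and_eventually ((hle x r hr).and h.ae_ne_top)).exists
  refine ne_top_of_le_ne_top ?_ (hz hzB)
  exact ENNReal.mul_ne_top (ENNReal.mul_ne_top hC measure_closedBall_lt_top.ne) hz_top

variable [BorelSpace V]

theorem IsMuckenhoupt.isAInftyMeasure (h : IsMuckenhoupt μ P w) (hP : 1 < P) :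
    IsAInftyMeasure μ (μ.withDensity w) where
  absolutelyContinuous := withDensity_absolutelyContinuous μ w
  closedBall_ne_top x r := by
    refine ne_top_of_le_ne_top ?_
      (measure_mono (closedBall_subset_closedBall (le_max_left r 1)))
    rw [withDensity_apply _ measurableSet_closedBall]
    exact h.setLIntegral_closedBall_ne_top hP (by positivity)
  exists_comparison := by
    obtain ⟨C, hC, hle⟩ := h.exists_bound
    refine ⟨P, by linarith, C, hC, fun x r hr E hE hEm => ?_⟩
    rw [withDensity_apply _ measurableSet_closedBall, withDensity_apply _ hEm]
    have holder := measure_univ_rpow_le_lintegral_mul_lintegral (μ := μ.restrict E) h.measurable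
      (ae_restrict_of_ae h.ae_ne_zero) (ae_restrict_of_ae h.ae_ne_top) hP
    rw [Measure.restrict_apply_univ] at holder
    calc (∫⁻ z in closedBall x r, w z ∂μ) * μ E ^ P
        ≤ (∫⁻ z in closedBall x r, w z ∂μ) * ((∫⁻ z in E, w z ∂μ) *
            (∫⁻ z in closedBall x r, w z ^ (-(1 / (P - 1))) ∂μ) ^ (P - 1)) := by
          gcongr
          refine holder.trans ?_
          gcongr
      _ = (∫⁻ z in closedBall x r, w z ∂μ) *
            (∫⁻ z in closedBall x r, w z ^ (-(1 / (P - 1))) ∂μ) ^ (P - 1) * ∫⁻ z in E, w z ∂μ := by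
          ring
      _ ≤ _ := mul_le_mul_left (hle x r hr) _

theorem IsMuckenhouptOne.isMuckenhoupt (h : IsMuckenhouptOne μ w) (hP : 1 < P) :
    IsMuckenhoupt μ P w := by
  obtain ⟨C, hC, hle⟩ := h.exists_bound
  refine ⟨h.toIsENNWeight, C, hC, fun x r hr => ?_⟩
  have hP1 : 0 < P - 1 := sub_pos.2 hP
  have hμ0 : μ (closedBall x r) ≠ 0 := (measure_closedBall_pos μ x hr).ne'
  have hμ : μ (closedBall x r) ≠ ⊤ := measure_closedBall_lt_top.ne
  have hI : ∫⁻ z in closedBall x r, w z ∂μ ≠ ⊤ := h.setLIntegral_closedBall_ne_top hr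
  have hI0 := setLIntegral_ne_zero_of_ae_ne_zero h.measurable h.ae_ne_zero hμ0
  set I := ∫⁻ z in closedBall x r, w z ∂μ
  set M := μ (closedBall x r)
  have hdual : ∫⁻ z in closedBall x r, w z ^ (-(1 / (P - 1))) ∂μ ≤
      (C * M / I) ^ (1 / (P - 1)) * M := by
    rw [← setLIntegral_const]
    refine lintegral_mono_ae ?_
    filter_upwards [(ae_restrict_iff' measurableSet_closedBall).2 (hle x r hr)] with z hz
    rw [ENNReal.rpow_neg, ← ENNReal.inv_rpow]
    gcongr
    rw [ENNReal.le_div_iff_mul_le (Or.inl hI0) (Or.inl hI), ← ENNReal.div_eq_inv_mul]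
    exact ENNReal.div_le_of_le_mul hz
  calc I * (∫⁻ z in closedBall x r, w z ^ (-(1 / (P - 1))) ∂μ) ^ (P - 1)
      ≤ I * ((C * M / I) ^ (1 / (P - 1)) * M) ^ (P - 1) := by gcongr
    _ = C * (M * M ^ (P - 1)) * (I / I) := by
        rw [ENNReal.mul_rpow_of_nonneg _ _ hP1.le, ← ENNReal.rpow_mul,
          one_div_mul_cancel hP1.ne', ENNReal.rpow_one, div_eq_mul_inv, div_eq_mul_inv]
        ring
    _ = C * M ^ P := by
        rw [ENNReal.div_self hI0 hI, mul_one]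
        nth_rw 1 [← ENNReal.rpow_one M]
        rw [← ENNReal.rpow_add _ _ hμ0 hμ, add_sub_cancel]

theorem IsMuckenhouptOne.isAInftyMeasure (h : IsMuckenhouptOne μ w) :
    IsAInftyMeasure μ (μ.withDensity w) :=
  (h.isMuckenhoupt one_lt_two).isAInftyMeasure one_lt_two

end Muckenhoupt

theorem lintegral_rpow_le_rpow_mul_rpow {X : Type*} [MeasurableSpace X] {μ : Measure X}
    {w : X → ℝ≥0∞} (hw : AEMeasurable w μ) {θ : ℝ} (hθ0 : 0 ≤ θ) (hθ1 : θ ≤ 1) :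
    ∫⁻ x, w x ^ θ ∂μ ≤ (∫⁻ x, w x ∂μ) ^ θ * μ univ ^ (1 - θ) := by
  simpa using ENNReal.lintegral_mul_norm_pow_le hw aemeasurable_const hθ0 (sub_nonneg.2 hθ1)
    (add_sub_cancel _ _) (g := fun _ => 1)

theorem tsum_int_le_of_le_mul_pow {f : ℤ → ℝ≥0∞} {K γ : ℝ≥0∞}
    (h : ∀ k (j : ℕ), f (k + j) ≠ 0 → f k ≤ K * γ ^ j) : ∑' k, f k ≤ K * (1 - γ)⁻¹ := by
  rw [ENNReal.tsum_eq_iSup_sum]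
  refine iSup_le fun s => ?_
  rw [← Finset.sum_filter_ne_zero]
  rcases (s.filter fun k => f k ≠ 0).eq_empty_or_nonempty with hs | hs
  · simp [hs]
  set k₀ := (s.filter fun k => f k ≠ 0).max' hs
  have hk₀ : f k₀ ≠ 0 := (Finset.mem_filter.1 (Finset.max'_mem _ hs)).2
  have hle : ∀ k ∈ s.filter fun k => f k ≠ 0, k ≤ k₀ := fun k hk => Finset.le_max' _ k hk
  calc ∑ k ∈ s with f k ≠ 0, f k ≤ ∑ k ∈ s with f k ≠ 0, K * γ ^ (k₀ - k).toNat := by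
        refine Finset.sum_le_sum fun k hk => h k _ ?_
        rwa [Int.toNat_of_nonneg (sub_nonneg.2 (hle k hk)), add_sub_cancel]
    _ = ∑ j ∈ (s.filter fun k => f k ≠ 0).image fun k => (k₀ - k).toNat, K * γ ^ j := by
        rw [Finset.sum_image fun k hk l hl hkl => ?_]
        have := hle k hk
        have := hle l hl
        omega
    _ ≤ ∑' j, K * γ ^ j := ENNReal.sum_le_tsum _
    _ = _ := by rw [ENNReal.tsum_mul_left, ENNReal.tsum_geometric]

theorem min_inv_rpow_le_add_ite {a : ℝ} (ha : 0 ≤ a) (c : ℝ≥0∞) :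
    min c c⁻¹ ^ a ≤ (if c ≤ 1 then c ^ a else 0) + (if 1 ≤ c then c⁻¹ ^ a else 0) := by
  rcases le_total c 1 with h | h
  · rw [if_pos h]
    exact le_add_of_le_left (ENNReal.rpow_le_rpow (min_le_left _ _) ha)
  · rw [if_pos h]
    exact le_add_of_le_right (ENNReal.rpow_le_rpow (min_le_right _ _) ha)

theorem exists_tsum_min_inv_rpow_le {L γ : ℝ≥0∞} (hL : L ≠ ⊤) (hγ : γ < 1) {a : ℝ} (ha : 0 < a) :
    ∃ K : ℝ≥0∞, K ≠ ⊤ ∧ ∀ c : ℤ → ℝ≥0∞, (∀ k (j : ℕ), c k ≤ L * γ ^ j * c (k + j)) →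
      ∑' k, min (c k) (c k)⁻¹ ^ a ≤ K := by
  have hγa : γ ^ a < 1 := ENNReal.rpow_lt_one hγ ha
  have hinv : (1 - γ ^ a)⁻¹ ≠ ⊤ := ENNReal.inv_ne_top.2 (tsub_pos_of_lt hγa).ne'
  refine ⟨L ^ a * (1 - γ ^ a)⁻¹ + L ^ a * (1 - γ ^ a)⁻¹, by finiteness, fun c hc => ?_⟩
  have hpow (x : ℝ≥0∞) (j : ℕ) (h : x ≤ L * γ ^ j) : x ^ a ≤ L ^ a * (γ ^ a) ^ j := by
    rw [← ENNReal.rpow_natCast, ← ENNReal.rpow_mul, mul_comm a, ENNReal.rpow_mul,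
      ENNReal.rpow_natCast, ← ENNReal.mul_rpow_of_nonneg _ _ ha.le]
    gcongr
  have below : ∑' k, (if c k ≤ 1 then c k ^ a else 0) ≤ L ^ a * (1 - γ ^ a)⁻¹ := by
    refine tsum_int_le_of_le_mul_pow fun k j hk => ?_
    have hkj : c (k + j) ≤ 1 := by_contra fun h => hk (if_neg h)
    split_ifs
    · exact hpow _ _ ((hc k j).trans (mul_le_of_le_one_right' hkj))
    · exact zero_le
  have above : ∑' k, (if 1 ≤ c (-k) then (c (-k))⁻¹ ^ a else 0) ≤ L ^ a * (1 - γ ^ a)⁻¹ := by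
    refine tsum_int_le_of_le_mul_pow fun k j hk => ?_
    have hkj : 1 ≤ c (-(k + j)) := by_contra fun h => hk (if_neg h)
    split_ifs
    · refine hpow _ _ ?_
      rw [← one_div]
      refine ENNReal.div_le_of_le_mul (hkj.trans ?_)
      simpa using hc (-(k + j)) j
    · exact zero_le
  rw [← (Equiv.neg ℤ).tsum_eq] at below
  calc ∑' k, min (c k) (c k)⁻¹ ^ a = ∑' k, min (c (-k)) (c (-k))⁻¹ ^ a :=
        ((Equiv.neg ℤ).tsum_eq fun k => min (c k) (c k)⁻¹ ^ a).symm
    _ ≤ ∑' k, ((if c (-k) ≤ 1 then c (-k) ^ a else 0) +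
          (if 1 ≤ c (-k) then (c (-k))⁻¹ ^ a else 0)) :=
        ENNReal.tsum_le_tsum fun k => min_inv_rpow_le_add_ite ha.le _
    _ ≤ _ := by
        rw [ENNReal.tsum_add]
        exact add_le_add below above

section WeightComparison

variable {X : Type*} [MeasurableSpace X] {μ : Measure X} {W Z : X → ℝ≥0∞} {θ : ℝ} {b : ℝ≥0∞}
  {F : Set X}

theorem withDensity_mul_le_of_forall_mem_le (hW : Measurable W) (hθ0 : 0 ≤ θ) (hθ1 : θ ≤ 1)
    (hF : MeasurableSet F) (hFb : ∀ x ∈ F, Z x ≤ b * W x ^ θ) :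
    μ.withDensity (fun x => W x ^ (1 - θ) * Z x) F ≤ b * μ.withDensity W F := by
  rw [withDensity_apply _ hF, withDensity_apply _ hF, ← lintegral_const_mul _ hW]
  refine setLIntegral_mono (hW.const_mul b) fun x hx => ?_
  calc W x ^ (1 - θ) * Z x ≤ W x ^ (1 - θ) * (b * W x ^ θ) := by gcongr; exact hFb x hx
    _ = b * (W x ^ (1 - θ) * W x ^ θ) := by ring
    _ = b * W x := by
      rw [← ENNReal.rpow_add_of_nonneg _ _ (sub_nonneg.2 hθ1) hθ0, sub_add_cancel,
        ENNReal.rpow_one]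

theorem withDensity_le_of_forall_mem_le (hW : Measurable W) (hθ0 : 0 ≤ θ) (hθ1 : θ ≤ 1)
    (hF : MeasurableSet F) (hFb : ∀ x ∈ F, Z x ≤ b * W x ^ θ) :
    μ.withDensity Z F ≤ b * (μ.withDensity W F ^ θ * μ F ^ (1 - θ)) := by
  rw [withDensity_apply _ hF, withDensity_apply _ hF]
  refine (setLIntegral_mono ((hW.pow_const θ).const_mul b) hFb).trans ?_
  rw [lintegral_const_mul _ (hW.pow_const θ)]
  gcongr
  simpa using lintegral_rpow_le_rpow_mul_rpow (μ := μ.restrict F) hW.aemeasurable hθ0 hθ1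

theorem withDensity_mul_le_of_forall_mem_le_const (hW : Measurable W) (hθ0 : 0 ≤ θ) (hθ1 : θ ≤ 1)
    (hF : MeasurableSet F) (hFb : ∀ x ∈ F, Z x ≤ b) :
    μ.withDensity (fun x => W x ^ (1 - θ) * Z x) F ≤
      b * (μ.withDensity W F ^ (1 - θ) * μ F ^ θ) := by
  rw [withDensity_apply _ hF, withDensity_apply _ hF]
  calc ∫⁻ x in F, W x ^ (1 - θ) * Z x ∂μ ≤ ∫⁻ x in F, b * W x ^ (1 - θ) ∂μ := by
        refine setLIntegral_mono ((hW.pow_const _).const_mul b) fun x hx => ?_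
        rw [mul_comm]
        exact mul_le_mul_left (hFb x hx) _
    _ ≤ b * ((∫⁻ x in F, W x ∂μ) ^ (1 - θ) * μ F ^ θ) := by
        rw [lintegral_const_mul _ (hW.pow_const _)]
        gcongr
        simpa using lintegral_rpow_le_rpow_mul_rpow (μ := μ.restrict F) hW.aemeasurable
          (sub_nonneg.2 hθ1) (sub_le_self 1 hθ0)

theorem withDensity_mul_le_of_forall_mem_le_div {B : Set X} {c : ℝ≥0∞} (hW : Measurable W)
    (hθ0 : 0 ≤ θ) (hθ1 : θ ≤ 1) (hF : MeasurableSet F) (hFB : F ⊆ B) (hc0 : c ≠ 0) (hc : c ≠ ⊤)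
    (hB0 : μ B ≠ 0) (hB : μ B ≠ ⊤)
    (hFb : ∀ x ∈ F, Z x ≤ c ^ (-(1 / 2 : ℝ)) * (μ.withDensity Z B / μ B))
    (h : μ.withDensity Z B ≤ c * (b * (μ.withDensity W B ^ θ * μ B ^ (1 - θ)))) :
    μ.withDensity (fun x => W x ^ (1 - θ) * Z x) F ≤
      c ^ (1 / 2 : ℝ) * (b * μ.withDensity W B) := by
  have hθ1' := sub_nonneg.2 hθ1
  refine (withDensity_mul_le_of_forall_mem_le_const hW hθ0 hθ1 hF hFb).trans ?_
  calc _ ≤ c ^ (-(1 / 2 : ℝ)) * (c * (b * (μ.withDensity W B ^ θ * μ B ^ (1 - θ))) / μ B) *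
          (μ.withDensity W B ^ (1 - θ) * μ B ^ θ) := by gcongr
    _ = c ^ (-(1 / 2 : ℝ)) * c ^ (1 : ℝ) *
          (b * (μ.withDensity W B ^ (1 - θ) * μ.withDensity W B ^ θ)) *
          (μ B ^ (1 - θ) * μ B ^ θ * (μ B)⁻¹) := by
        rw [ENNReal.rpow_one, div_eq_mul_inv (_ : ℝ≥0∞) (μ B)]
        ring
    _ = c ^ (1 / 2 : ℝ) * (b * μ.withDensity W B) := by
        rw [← ENNReal.rpow_add _ _ hc0 hc, ← ENNReal.rpow_add_of_nonneg _ _ hθ1' hθ0,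
          ← ENNReal.rpow_add_of_nonneg _ _ hθ1' hθ0, sub_add_cancel, ENNReal.rpow_one,
          ENNReal.rpow_one, ENNReal.mul_inv_cancel hB0 hB, mul_one]
        norm_num

theorem measure_div_le_inv_of_forall_mem_le {B : Set X} {c : ℝ≥0∞} (hF : MeasurableSet F)
    (hFB : F ⊆ B) (hc : c ≠ 0) (hB0 : μ.withDensity Z B ≠ 0) (hB : μ.withDensity Z B ≠ ⊤)
    (hFb : ∀ x ∈ F, c * (μ.withDensity Z B / μ B) ≤ Z x) : μ F / μ B ≤ c⁻¹ := by
  rw [← one_div c, ENNReal.le_div_iff_mul_le (Or.inl hc) (Or.inr one_ne_top)]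
  refine (ENNReal.mul_le_mul_iff_left hB0 hB).1 ?_
  calc μ F / μ B * c * μ.withDensity Z B = c * (μ.withDensity Z B / μ B) * μ F := by
        simp only [div_eq_mul_inv]
        ring
    _ ≤ μ.withDensity Z F := by
        rw [withDensity_apply _ hF, ← setLIntegral_const]
        exact setLIntegral_mono' hF hFb
    _ ≤ 1 * μ.withDensity Z B := by
        rw [one_mul]
        exact measure_mono hFB

end WeightComparison

section BallTesting

open Metric Module

variable {V : Type*} [NormedAddCommGroup V] [NormedSpace ℝ V] [FiniteDimensional ℝ V]
  [MeasurableSpace V] {μ : Measure V} [μ.IsAddHaarMeasure]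

theorem IsAInftyMeasure.exists_measure_div_le_rpow {ζ : Measure V}
    (h : IsAInftyMeasure μ ζ) :
    ∃ a : ℝ, 0 < a ∧ ∃ C : ℝ≥0∞, C ≠ ⊤ ∧ ∀ x r, 0 < r → ζ (closedBall x r) ≠ 0 →
      ∀ E ⊆ closedBall x r, MeasurableSet E → ∀ c : ℝ≥0∞, c ≠ 0 → c ≠ ⊤ →
        c * ζ E ≤ ζ (closedBall x r) → μ E / μ (closedBall x r) ≤ C * c⁻¹ ^ a := by
  obtain ⟨P, hP, C, hC, comparison⟩ := h.exists_comparison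
  refine ⟨P⁻¹, by positivity, C ^ P⁻¹, by finiteness,
    fun x r hr hζ0 E hE hEm c hc0 hc hcE => ?_⟩
  have hμ0 : μ (closedBall x r) ≠ 0 := (measure_closedBall_pos μ x hr).ne'
  have hμ : μ (closedBall x r) ≠ ⊤ := measure_closedBall_lt_top.ne
  have hle := comparison x r hr E hE hEm
  have hζ := h.closedBall_ne_top x r
  generalize ζ (closedBall x r) = Q at *
  generalize μ (closedBall x r) = M at *
  rw [← ENNReal.mul_rpow_of_nonneg _ _ (by positivity), ENNReal.le_rpow_inv_iff hP,
    ENNReal.div_rpow_of_nonneg _ _ hP.le,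
    ENNReal.div_le_iff (by simp [ENNReal.rpow_eq_zero_iff, hμ0, hμ]) (by finiteness)]
  refine (ENNReal.mul_le_mul_iff_right (mul_ne_zero hc0 hζ0) (by finiteness)).1 ?_
  calc c * Q * μ E ^ P = c * (Q * μ E ^ P) := by ring
    _ ≤ c * (C * M ^ P * ζ E) := by gcongr
    _ = C * M ^ P * (c * ζ E) := by ring
    _ ≤ C * M ^ P * Q := by gcongr
    _ = c * c⁻¹ * Q * (C * M ^ P) := by rw [ENNReal.mul_inv_cancel hc0 hc]; ring
    _ = c * Q * (C * c⁻¹ * M ^ P) := by ring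

variable [BorelSpace V] {W Z : V → ℝ≥0∞}

theorem exists_withDensity_mul_le_of_mul_le (hW : Measurable W)
    (hω : IsAInftyMeasure μ (μ.withDensity W)) (hζ : IsAInftyMeasure μ (μ.withDensity Z)) :
    ∃ a : ℝ, 0 < a ∧ ∃ K : ℝ≥0∞, K ≠ ⊤ ∧ ∀ θ : ℝ, 0 ≤ θ → θ ≤ 1 → ∀ y r, 0 < r →
      μ.withDensity Z (closedBall y r) ≠ 0 → ∀ b c : ℝ≥0∞, c ≠ 0 → c ≠ ⊤ →
      c * (b * (μ.withDensity W (closedBall y r) ^ θ * μ (closedBall y r) ^ (1 - θ))) ≤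
        μ.withDensity Z (closedBall y r) →
      ∀ F ⊆ closedBall y r, MeasurableSet F → (∀ x ∈ F, Z x ≤ b * W x ^ θ) →
      μ.withDensity (fun x => W x ^ (1 - θ) * Z x) F ≤
        K * c⁻¹ ^ a * (b * μ.withDensity W (closedBall y r)) := by
  obtain ⟨η, hη, K, hK, decay⟩ := hω.exists_measure_le_rpow
  obtain ⟨a, ha, C, hC, comparison⟩ := hζ.exists_measure_div_le_rpow
  refine ⟨a * η, by positivity, K * C ^ η, by finiteness,
    fun θ hθ0 hθ1 y r hr hB0 b c hc0 hc hcb F hFB hFm hFb => ?_⟩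
  have hζF : c * μ.withDensity Z F ≤ μ.withDensity Z (closedBall y r) := by
    refine le_trans (mul_le_mul_right ?_ c) hcb
    refine (withDensity_le_of_forall_mem_le hW hθ0 hθ1 hFm hFb).trans ?_
    have := sub_nonneg.2 hθ1
    gcongr
  calc _ ≤ b * μ.withDensity W F := withDensity_mul_le_of_forall_mem_le hW hθ0 hθ1 hFm hFb
    _ ≤ b * (K * (C * c⁻¹ ^ a) ^ η * μ.withDensity W (closedBall y r)) := by
        gcongr
        refine (decay y r hr F hFB hFm).trans ?_
        gcongr
        exact comparison y r hr hB0 F hFB hFm c hc0 hc hζF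
    _ = _ := by
        rw [ENNReal.mul_rpow_of_nonneg _ _ hη.le, ← ENNReal.rpow_mul c⁻¹]
        ring

theorem exists_withDensity_mul_le_of_le_mul (hW : Measurable W) (hZ : Measurable Z)
    (hω : IsAInftyMeasure μ (μ.withDensity W)) (hζ : IsAInftyMeasure μ (μ.withDensity Z)) :
    ∃ a : ℝ, 0 < a ∧ ∃ K : ℝ≥0∞, K ≠ ⊤ ∧ ∀ θ : ℝ, 0 ≤ θ → θ ≤ 1 → ∀ y r, 0 < r →
      μ.withDensity Z (closedBall y r) ≠ 0 → ∀ b c : ℝ≥0∞, c ≠ 0 → c ≤ 1 →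
      μ.withDensity Z (closedBall y r) ≤
        c * (b * (μ.withDensity W (closedBall y r) ^ θ * μ (closedBall y r) ^ (1 - θ))) →
      ∀ F ⊆ closedBall y r, MeasurableSet F → (∀ x ∈ F, Z x ≤ b * W x ^ θ) →
      μ.withDensity (fun x => W x ^ (1 - θ) * Z x) F ≤
        K * c ^ a * (b * μ.withDensity W (closedBall y r)) := by
  obtain ⟨η, hη, K, hK, decay⟩ := hω.exists_measure_le_rpow
  refine ⟨min (1 / 2) (1 / 2 * η), by positivity, 1 + K, by finiteness,
    fun θ hθ0 hθ1 y r hr hZ0 b c hc0 hc1 hcb F hFB hFm hFb => ?_⟩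
  have hc : c ≠ ⊤ := ne_top_of_le_ne_top one_ne_top hc1
  have hμ0 : μ (closedBall y r) ≠ 0 := (measure_closedBall_pos μ y hr).ne'
  have hμ : μ (closedBall y r) ≠ ⊤ := measure_closedBall_lt_top.ne
  set s := c ^ (-(1 / 2 : ℝ)) * (μ.withDensity Z (closedBall y r) / μ (closedBall y r))
  have hsm : MeasurableSet {x | s < Z x} := measurableSet_lt measurable_const hZ
  have low : μ.withDensity (fun x => W x ^ (1 - θ) * Z x) (F \ {x | s < Z x}) ≤
      c ^ (1 / 2 : ℝ) * (b * μ.withDensity W (closedBall y r)) :=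
    withDensity_mul_le_of_forall_mem_le_div hW hθ0 hθ1 (hFm.diff hsm) (sdiff_subset.trans hFB)
      hc0 hc hμ0 hμ (fun x hx => not_lt.1 hx.2) hcb
  have high : μ.withDensity (fun x => W x ^ (1 - θ) * Z x) (F ∩ {x | s < Z x}) ≤
      K * c ^ (1 / 2 * η) * (b * μ.withDensity W (closedBall y r)) := by
    have hE : F ∩ {x | s < Z x} ⊆ closedBall y r := inter_subset_left.trans hFB
    have small : μ (F ∩ {x | s < Z x}) / μ (closedBall y r) ≤ c ^ (1 / 2 : ℝ) := by
      rw [← inv_inv (c ^ (1 / 2 : ℝ)), ← ENNReal.rpow_neg]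
      exact measure_div_le_inv_of_forall_mem_le (hFm.inter hsm) hE
        (by simp [ENNReal.rpow_eq_zero_iff, hc]) hZ0 (hζ.closedBall_ne_top y r) fun x hx => hx.2.le
    calc _ ≤ b * μ.withDensity W (F ∩ {x | s < Z x}) :=
          withDensity_mul_le_of_forall_mem_le hW hθ0 hθ1 (hFm.inter hsm) fun x hx => hFb x hx.1
      _ ≤ b * (K * (c ^ (1 / 2 : ℝ)) ^ η * μ.withDensity W (closedBall y r)) := by
          gcongr
          refine (decay y r hr _ hE (hFm.inter hsm)).trans ?_
          gcongr
      _ = _ := by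
          rw [← ENNReal.rpow_mul]
          ring
  rw [← measure_inter_add_sdiff F hsm, add_comm]
  refine (add_le_add low high).trans ?_
  rw [add_mul, add_mul, one_mul]
  gcongr ?_ * _ + _ * ?_ * _
  · exact ENNReal.rpow_le_rpow_of_exponent_ge hc1 (min_le_left _ _)
  · exact ENNReal.rpow_le_rpow_of_exponent_ge hc1 (min_le_right _ _)

end BallTesting

theorem div_le_mul_div_of_le_mul {ζ ζ' N N' A L : ℝ≥0∞} (hζ : ζ ≤ A * ζ') (hN : N' ≤ L * N)
    (hN' : N' ≠ 0) (hL : L ≠ ⊤) : ζ / N ≤ L * (A * (ζ' / N')) := by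
  have hinv : N⁻¹ ≤ L * N'⁻¹ := by
    rw [← div_eq_mul_inv, ENNReal.le_div_iff_mul_le (Or.inl hN') (Or.inr hL), mul_comm]
    exact ENNReal.div_le_of_le_mul hN
  calc ζ / N ≤ A * ζ' * (L * N'⁻¹) := mul_le_mul' hζ hinv
    _ = L * (A * (ζ' / N')) := by rw [div_eq_mul_inv]; ring

theorem withDensity_closedBall_ne_zero {X : Type*} [PseudoMetricSpace X] [MeasurableSpace X]
    [OpensMeasurableSpace X] {μ : Measure X} [μ.IsOpenPosMeasure] {w : X → ℝ≥0∞} (hw : Measurable w)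
    (hw0 : ∀ᵐ x ∂μ, w x ≠ 0) (x : X) {r : ℝ} (hr : 0 < r) :
    μ.withDensity w (Metric.closedBall x r) ≠ 0 := by
  rw [withDensity_apply _ measurableSet_closedBall]
  exact setLIntegral_ne_zero_of_ae_ne_zero hw hw0 (Metric.measure_closedBall_pos μ x hr).ne'

/-- The part of the dyadic ball `closedBall y (2 ^ k)` that carries a level set of
`W * g / (W ^ (1 - θ) * Z)` when `g ≤ b k` on the `k`-th shell about `y`. -/
def dyadicTestSet {X : Type*} [MetricSpace X] (W Z : X → ℝ≥0∞) (θ : ℝ) (y : X) (b : ℤ → ℝ≥0∞)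
    (k : ℤ) : Set X :=
  Metric.closedBall y (2 ^ k) ∩ {x | Z x ≤ b k * W x ^ θ}

theorem setOf_lt_subset_iUnion_dyadicTestSet {X : Type*} [MetricSpace X]
    {W Z g : X → ℝ≥0∞} {b : ℤ → ℝ≥0∞} {t : ℝ≥0∞} {y : X} {θ : ℝ}
    (hθ0 : 0 ≤ θ) (hθ1 : θ ≤ 1) (ht0 : t ≠ 0) (ht : t ≠ ⊤)
    (hg : ∀ k : ℤ, ∀ x, 2 ^ (k - 1) ≤ dist x y → dist x y ≤ 2 ^ k → g x ≤ b k) :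
    {x | t < W x * g x / (W x ^ (1 - θ) * Z x)} ⊆
      {y} ∪ ⋃ k, dyadicTestSet W Z θ y (fun k => b k / t) k := by
  intro x hx
  refine or_iff_not_imp_left.2 fun hxy => ?_
  obtain ⟨k, hk⟩ := exists_mem_Ioc_zpow (dist_pos.2 hxy) (one_lt_two (α := ℝ))
  refine mem_iUnion.2 ⟨k + 1, hk.2, ?_⟩
  have hgk := hg (k + 1) x (by simpa using hk.1.le) hk.2
  have h : W x ^ (1 - θ) * (t * Z x) < W x ^ (1 - θ) * (W x ^ θ * g x) := by
    calc _ = t * (W x ^ (1 - θ) * Z x) := by ring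
      _ < W x * g x := ENNReal.mul_lt_of_lt_div hx
      _ = W x ^ (1 - θ) * (W x ^ θ * g x) := by
        rw [← mul_assoc, ← ENNReal.rpow_add_of_nonneg _ _ (sub_nonneg.2 hθ1) hθ0, sub_add_cancel,
          ENNReal.rpow_one]
  rw [Set.mem_ofPred_eq, ← ENNReal.mul_div_right_comm, ENNReal.le_div_iff_mul_le (Or.inl ht0)
    (Or.inl ht), mul_comm, mul_comm (b _)]
  exact (lt_of_mul_lt_mul_left' h).le.trans (by gcongr)

section DyadicTesting

open Metric Module

variable {V : Type*} [NormedAddCommGroup V] [NormedSpace ℝ V] [FiniteDimensional ℝ V]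
  [MeasurableSpace V] [BorelSpace V] {μ : Measure V} [μ.IsAddHaarMeasure] {W Z : V → ℝ≥0∞}

theorem exists_withDensity_mul_le_min (hW : Measurable W) (hZ : Measurable Z)
    (hω : IsAInftyMeasure μ (μ.withDensity W)) (hζ : IsAInftyMeasure μ (μ.withDensity Z)) :
    ∃ a : ℝ, 0 < a ∧ ∃ K : ℝ≥0∞, K ≠ ⊤ ∧ ∀ θ : ℝ, 0 ≤ θ → θ ≤ 1 → ∀ y r, 0 < r →
      μ.withDensity W (closedBall y r) ≠ 0 → μ.withDensity Z (closedBall y r) ≠ 0 →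
      ∀ b c : ℝ≥0∞, b ≠ 0 → b ≠ ⊤ → c = μ.withDensity Z (closedBall y r) /
        (b * (μ.withDensity W (closedBall y r) ^ θ * μ (closedBall y r) ^ (1 - θ))) →
      ∀ F ⊆ closedBall y r, MeasurableSet F → (∀ x ∈ F, Z x ≤ b * W x ^ θ) →
      μ.withDensity (fun x => W x ^ (1 - θ) * Z x) F ≤
        K * min c c⁻¹ ^ a * (b * μ.withDensity W (closedBall y r)) := by
  obtain ⟨a₁, ha₁, K₁, hK₁, large⟩ := exists_withDensity_mul_le_of_mul_le (Z := Z) hW hω hζ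
  obtain ⟨a₂, ha₂, K₂, hK₂, small⟩ := exists_withDensity_mul_le_of_le_mul hW hZ hω hζ
  refine ⟨min a₁ a₂, by positivity, K₁ + K₂, by finiteness,
    fun θ hθ0 hθ1 y r hr hW0 hZ0 b c hb0 hb hc F hFB hFm hFb => ?_⟩
  have hWtop := hω.closedBall_ne_top y r
  have hZtop := hζ.closedBall_ne_top y r
  have hμ0 : μ (closedBall y r) ≠ 0 := (measure_closedBall_pos μ y hr).ne'
  have hμ : μ (closedBall y r) ≠ ⊤ := measure_closedBall_lt_top.ne
  have hN0 : b * (μ.withDensity W (closedBall y r) ^ θ * μ (closedBall y r) ^ (1 - θ)) ≠ 0 := by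
    simp [ENNReal.rpow_eq_zero_iff, *]
  have hN : b * (μ.withDensity W (closedBall y r) ^ θ * μ (closedBall y r) ^ (1 - θ)) ≠ ⊤ := by
    have := sub_nonneg.2 hθ1
    finiteness
  have hcN : c * (b * (μ.withDensity W (closedBall y r) ^ θ * μ (closedBall y r) ^ (1 - θ))) =
      μ.withDensity Z (closedBall y r) := hc ▸ ENNReal.div_mul_cancel hN0 hN
  have hc0 : c ≠ 0 := fun h => hZ0 (by rw [← hcN, h, zero_mul])
  have hctop : c ≠ ⊤ := hc ▸ ENNReal.div_ne_top hZtop hN0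
  rcases le_total c 1 with h | h
  · rw [min_eq_left (h.trans (ENNReal.one_le_inv.2 h))]
    refine (small θ hθ0 hθ1 y r hr hZ0 b c hc0 h hcN.ge F hFB hFm hFb).trans ?_
    gcongr ?_ * ?_ * _
    · exact le_add_self
    · exact ENNReal.rpow_le_rpow_of_exponent_ge h (min_le_right _ _)
  · have h' := ENNReal.inv_le_one.2 h
    rw [min_eq_right (h'.trans h)]
    refine (large θ hθ0 hθ1 y r hr hZ0 b c hc0 hctop hcN.le F hFB hFm hFb).trans ?_
    gcongr ?_ * ?_ * _
    · exact le_self_add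
    · exact ENNReal.rpow_le_rpow_of_exponent_ge h' (min_le_left _ _)

theorem IsAInftyMeasure.exists_measure_closedBall_le_pow_mul [Nontrivial V] {ζ : Measure V}
    (hζ : IsAInftyMeasure μ ζ) :
    ∃ K : ℝ≥0∞, K ≠ ⊤ ∧ ∃ γ : ℝ≥0∞, γ < 1 ∧ ∀ y (k : ℤ) (j : ℕ),
      ζ (closedBall y (2 ^ k)) ≤ K * γ ^ j * ζ (closedBall y (2 ^ (k + j))) := by
  obtain ⟨η, hη, K, hK, decay⟩ := hζ.exists_measure_le_rpow
  refine ⟨K, hK, (2⁻¹ ^ finrank ℝ V) ^ η, ENNReal.rpow_lt_one (pow_lt_one' (by simp)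
    finrank_pos.ne') hη, fun y k j => ?_⟩
  have hr : (2 : ℝ) ^ k = (2⁻¹) ^ j * 2 ^ (k + j) := by
    rw [zpow_add₀ two_ne_zero, zpow_natCast, mul_left_comm, inv_pow,
      inv_mul_cancel₀ (by positivity), mul_one]
  have hratio : μ (closedBall y (2 ^ k)) / μ (closedBall y (2 ^ (k + j))) =
      (2⁻¹ ^ finrank ℝ V) ^ j := by
    rw [hr, addHaar_closedBall_mul_eq y y (by positivity) (by positivity),
      ENNReal.mul_div_cancel_right (measure_closedBall_pos μ y (by positivity)).ne'
      measure_closedBall_lt_top.ne, ENNReal.ofReal_pow (by positivity),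
      ENNReal.ofReal_inv_of_pos two_pos, ENNReal.ofReal_ofNat, pow_right_comm]
  have := decay y (2 ^ (k + j)) (by positivity) (closedBall y (2 ^ k))
    (closedBall_subset_closedBall (zpow_le_zpow_right₀ one_le_two (by simp)))
    measurableSet_closedBall
  rwa [hratio, ← ENNReal.rpow_natCast, ← ENNReal.rpow_mul, mul_comm _ η, ENNReal.rpow_mul,
    ENNReal.rpow_natCast] at this

theorem exists_weakENorm_div_le_of_forall_dyadic [Nontrivial V] (hW : Measurable W)
    (hZ : Measurable Z) (hω : IsAInftyMeasure μ (μ.withDensity W))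
    (hζ : IsAInftyMeasure μ (μ.withDensity Z)) (hW0 : ∀ᵐ x ∂μ, W x ≠ 0) (hZ0 : ∀ᵐ x ∂μ, Z x ≠ 0)
    {L : ℝ≥0∞} (hL : L ≠ ⊤) :
    ∃ K : ℝ≥0∞, K ≠ ⊤ ∧ ∀ θ : ℝ, 0 ≤ θ → θ ≤ 1 → ∀ y (g : V → ℝ≥0∞) (b : ℤ → ℝ≥0∞) M,
      (∀ k, b k ≠ 0) → (∀ k, b k ≠ ⊤) →
      (∀ k : ℤ, ∀ x, 2 ^ (k - 1) ≤ dist x y → dist x y ≤ 2 ^ k → g x ≤ b k) →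
      (∀ k : ℤ, b k * μ.withDensity W (closedBall y (2 ^ k)) ≤ M) →
      (∀ (k : ℤ) (j : ℕ), b (k + j) * (μ.withDensity W (closedBall y (2 ^ (k + j))) ^ θ *
          μ (closedBall y (2 ^ (k + j))) ^ (1 - θ)) ≤
        L * (b k * (μ.withDensity W (closedBall y (2 ^ k)) ^ θ *
          μ (closedBall y (2 ^ k)) ^ (1 - θ)))) →
      weakENorm (μ.withDensity fun x => W x ^ (1 - θ) * Z x)
        (fun x => W x * g x / (W x ^ (1 - θ) * Z x)) 1 ≤ K * M := by
  obtain ⟨a, ha, K₁, hK₁, bound⟩ := exists_withDensity_mul_le_min hW hZ hω hζ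
  obtain ⟨K₂, hK₂, γ, hγ, growth⟩ := hζ.exists_measure_closedBall_le_pow_mul
  obtain ⟨K₃, hK₃, summable⟩ := exists_tsum_min_inv_rpow_le (by finiteness : L * K₂ ≠ ⊤) hγ ha
  refine ⟨K₁ * K₃, by finiteness, fun θ hθ0 hθ1 y g b M hb0 hb hg hM hN =>
    weakENorm_one_le_of_forall_measure_lt_le_div fun t ht0 ht => ?_⟩
  have hω0 (k : ℤ) := withDensity_closedBall_ne_zero hW hW0 y (zpow_pos (two_pos (α := ℝ)) k)
  have hζ0 (k : ℤ) := withDensity_closedBall_ne_zero hZ hZ0 y (zpow_pos (two_pos (α := ℝ)) k)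
  set δ := μ.withDensity fun x => W x ^ (1 - θ) * Z x
  have hδy : δ {y} = 0 := withDensity_absolutelyContinuous _ _ (measure_singleton y)
  set N : ℤ → ℝ≥0∞ := fun k =>
    μ.withDensity W (closedBall y (2 ^ k)) ^ θ * μ (closedBall y (2 ^ k)) ^ (1 - θ)
  set c : ℤ → ℝ≥0∞ := fun k => μ.withDensity Z (closedBall y (2 ^ k)) / (b k / t * N k)
  have shell (k : ℤ) : δ (dyadicTestSet W Z θ y (fun k => b k / t) k) ≤
      K₁ * min (c k) (c k)⁻¹ ^ a * (M / t) := by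
    refine (bound θ hθ0 hθ1 y _ (by positivity) (hω0 k) (hζ0 k) _ _
      (ENNReal.div_ne_zero.2 ⟨hb0 k, ht⟩) (ENNReal.div_ne_top (hb k) ht0) rfl _ inter_subset_left
      (measurableSet_closedBall.inter (measurableSet_le hZ ((hW.pow_const θ).const_mul _)))
      fun x hx => hx.2).trans ?_
    exact mul_le_mul_right (ENNReal.mul_div_right_comm.symm.trans_le
      (ENNReal.div_le_div_right (hM k) t)) _
  have hcγ (k : ℤ) (j : ℕ) : c k ≤ L * K₂ * γ ^ j * c (k + j) := by
    refine (div_le_mul_div_of_le_mul (growth y k j) (N' := b (k + j) / t * N (k + j)) ?_ ?_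
      hL).trans_eq (by simp only [c, mul_assoc])
    · calc _ = b (k + j) * N (k + j) / t := ENNReal.mul_div_right_comm.symm
        _ ≤ L * (b k * N k) / t := ENNReal.div_le_div_right (hN k j) t
        _ = _ := by simp only [div_eq_mul_inv]; ring
    · have := hω.closedBall_ne_top y (2 ^ (k + j))
      have := (measure_closedBall_lt_top (μ := μ) (x := y) (r := 2 ^ (k + j))).ne
      have := (measure_closedBall_pos μ y (by positivity : (0 : ℝ) < 2 ^ (k + j))).ne'
      simp [N, ENNReal.rpow_eq_zero_iff, *]
  calc _ ≤ δ {y} + ∑' k, δ (dyadicTestSet W Z θ y (fun k => b k / t) k) :=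
        (measure_mono (setOf_lt_subset_iUnion_dyadicTestSet hθ0 hθ1 ht0 ht hg)).trans
          ((measure_union_le _ _).trans (by gcongr; exact measure_iUnion_le _))
    _ ≤ ∑' k, K₁ * min (c k) (c k)⁻¹ ^ a * (M / t) := by
        rw [hδy, zero_add]
        exact ENNReal.tsum_le_tsum shell
    _ ≤ K₁ * K₃ * (M / t) := by
        rw [ENNReal.tsum_mul_right, ENNReal.tsum_mul_left]
        gcongr
        exact summable c hcγ
    _ = _ := (mul_div_assoc _ _ _).symm

end DyadicTesting

theorem inv_mul_rpow_mul_rpow_le {ω ω' M M' A : ℝ≥0∞} {θ : ℝ} (hθ : 0 ≤ θ) (hM0 : M ≠ 0)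
    (hM : M ≠ ⊤) (hM0' : M' ≠ 0) (hM' : M' ≠ ⊤) (h : ω' * M ≤ A * M' * ω) :
    M'⁻¹ * (ω' ^ θ * M' ^ (1 - θ)) ≤ A ^ θ * (M⁻¹ * (ω ^ θ * M ^ (1 - θ))) := by
  have ratio {ω M : ℝ≥0∞} (hM0 : M ≠ 0) (hM : M ≠ ⊤) :
      M⁻¹ * (ω ^ θ * M ^ (1 - θ)) = (ω / M) ^ θ := by
    rw [ENNReal.rpow_sub _ _ hM0 hM, ENNReal.rpow_one, mul_left_comm, div_eq_mul_inv,
      ← mul_assoc M⁻¹, ENNReal.inv_mul_cancel hM0 hM, one_mul, ← div_eq_mul_inv,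
      ENNReal.div_rpow_of_nonneg _ _ hθ]
  rw [ratio hM0 hM, ratio hM0' hM', ← ENNReal.mul_rpow_of_nonneg _ _ hθ]
  gcongr
  refine ENNReal.div_le_of_le_mul ?_
  calc ω' = ω' * M / M := (ENNReal.mul_div_cancel_right hM0 hM).symm
    _ ≤ A * M' * ω / M := ENNReal.div_le_div_right h M
    _ = A * (ω / M) * M' := by simp only [div_eq_mul_inv]; ring

section KernelTesting

open Metric Module

variable {V : Type*} [NormedAddCommGroup V] [NormedSpace ℝ V] [FiniteDimensional ℝ V]
  [MeasurableSpace V] [BorelSpace V] {μ : Measure V} [μ.IsAddHaarMeasure] {W Z : V → ℝ≥0∞}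

theorem exists_weakENorm_inv_measure_closedBall_div_le [Nontrivial V] (hW : Measurable W)
    (hZ : Measurable Z) (hω : IsAInftyMeasure μ (μ.withDensity W))
    (hζ : IsAInftyMeasure μ (μ.withDensity Z)) (hW0 : ∀ᵐ x ∂μ, W x ≠ 0)
    (hZ0 : ∀ᵐ x ∂μ, Z x ≠ 0) :
    ∃ K : ℝ≥0∞, K ≠ ⊤ ∧ ∀ y, weakENorm (μ.withDensity Z)
      (fun x => W x * (μ.withDensity W (closedBall y (dist x y)))⁻¹ / Z x) 1 ≤ K := by
  obtain ⟨K, hK, test⟩ := exists_weakENorm_div_le_of_forall_dyadic hW hZ hω hζ hW0 hZ0 one_ne_top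
  obtain ⟨D, hD, doubling⟩ := hω.exists_doubling 2
  refine ⟨K * (D + 1), by finiteness, fun y => ?_⟩
  have hω0 (k : ℤ) := withDensity_closedBall_ne_zero hW hW0 y (zpow_pos (two_pos (α := ℝ)) k)
  have hω_top (k : ℤ) := hω.closedBall_ne_top y (2 ^ k)
  have cancel (k : ℤ) : (D + 1) / μ.withDensity W (closedBall y (2 ^ k)) *
      μ.withDensity W (closedBall y (2 ^ k)) = D + 1 := ENNReal.div_mul_cancel (hω0 k) (hω_top k)
  have shell (k : ℤ) (x : V) (hx : 2 ^ (k - 1) ≤ dist x y) :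
      (μ.withDensity W (closedBall y (dist x y)))⁻¹ ≤
        (D + 1) / μ.withDensity W (closedBall y (2 ^ k)) := by
    rw [ENNReal.le_div_iff_mul_le (Or.inl (hω0 k)) (Or.inl (hω_top k)), mul_comm,
      ← div_eq_mul_inv]
    refine ENNReal.div_le_of_le_mul ?_
    calc μ.withDensity W (closedBall y (2 ^ k))
        = μ.withDensity W (closedBall y (2 * 2 ^ (k - 1))) := by
          rw [← zpow_one_add₀ two_ne_zero, add_sub_cancel]
      _ ≤ D * μ.withDensity W (closedBall y (2 ^ (k - 1))) := doubling y _ (by positivity)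
      _ ≤ (D + 1) * μ.withDensity W (closedBall y (dist x y)) :=
          mul_le_mul' le_self_add (measure_mono (closedBall_subset_closedBall hx))
  have := test 1 zero_le_one le_rfl y
    (fun x => (μ.withDensity W (closedBall y (dist x y)))⁻¹)
    (fun k => (D + 1) / μ.withDensity W (closedBall y (2 ^ k))) (D + 1)
    (fun k => by simp [hω_top]) (fun k => ENNReal.div_ne_top (by finiteness) (hω0 k))
    (fun k x hx _ => shell k x hx) (fun k => (cancel k).le) fun k j => by simp [cancel]
  simpa using this

theorem IsMuckenhouptOne.exists_ae_withDensity_closedBall_le (h : IsMuckenhouptOne μ W) :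
    ∃ C : ℝ≥0∞, C ≠ ⊤ ∧ ∀ᵐ y ∂μ, ∀ k : ℤ,
      μ.withDensity W (closedBall y (2 ^ k)) ≤ C * μ (closedBall y (2 ^ k)) * W y := by
  obtain ⟨C, hC, bound⟩ := h.exists_bound
  refine ⟨C * 2 ^ finrank ℝ V, by finiteness, ?_⟩
  have key : ∀ᵐ y ∂μ, ∀ (i : ℕ) (k : ℤ),
      y ∈ closedBall (TopologicalSpace.denseSeq V i) (2 * 2 ^ k) →
      ∫⁻ x in closedBall (TopologicalSpace.denseSeq V i) (2 * 2 ^ k), W x ∂μ ≤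
        C * μ (closedBall (TopologicalSpace.denseSeq V i) (2 * 2 ^ k)) * W y :=
    ae_all_iff.2 fun i => ae_all_iff.2 fun k => bound _ _ (by positivity)
  filter_upwards [key] with y hy k
  obtain ⟨i, hi⟩ := (TopologicalSpace.denseRange_denseSeq V).exists_dist_lt y
    (zpow_pos (two_pos (α := ℝ)) k)
  have hsub : closedBall y (2 ^ k) ⊆ closedBall (TopologicalSpace.denseSeq V i) (2 * 2 ^ k) :=
    closedBall_subset_closedBall' (by linarith)
  calc μ.withDensity W (closedBall y (2 ^ k))
      ≤ ∫⁻ x in closedBall (TopologicalSpace.denseSeq V i) (2 * 2 ^ k), W x ∂μ := by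
        rw [← withDensity_apply _ measurableSet_closedBall]
        exact measure_mono hsub
    _ ≤ C * μ (closedBall (TopologicalSpace.denseSeq V i) (2 * 2 ^ k)) * W y :=
        hy i k (hsub (mem_closedBall_self (by positivity)))
    _ = C * 2 ^ finrank ℝ V * μ (closedBall y (2 ^ k)) * W y := by
        rw [addHaar_closedBall_mul_eq _ y zero_le_two (by positivity), ENNReal.ofReal_ofNat,
          ← mul_assoc C]

theorem addHaar_closedBall_two_zpow (y : V) (k : ℤ) :
    μ (closedBall y (2 ^ k)) = 2 ^ finrank ℝ V * μ (closedBall y (2 ^ (k - 1))) := by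
  rw [← ENNReal.ofReal_ofNat 2, ← addHaar_closedBall_mul_eq _ _ zero_le_two (by positivity),
    ← zpow_one_add₀ two_ne_zero, add_sub_cancel]

theorem IsMuckenhouptOne.exists_ae_weakENorm_div_le [Nontrivial V] (h : IsMuckenhouptOne μ W)
    (hZ : Measurable Z) (hζ : IsAInftyMeasure μ (μ.withDensity Z)) (hZ0 : ∀ᵐ x ∂μ, Z x ≠ 0)
    {θ : ℝ} (hθ0 : 0 ≤ θ) (hθ1 : θ ≤ 1) :
    ∃ K : ℝ≥0∞, K ≠ ⊤ ∧ ∀ᵐ y ∂μ, weakENorm (μ.withDensity fun x => W x ^ (1 - θ) * Z x)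
      (fun x => W x * (μ (closedBall y (dist x y)) * W y)⁻¹ / (W x ^ (1 - θ) * Z x)) 1 ≤ K := by
  obtain ⟨A, hA, comparison⟩ := h.exists_withDensity_mul_measure_le
  obtain ⟨C, hC, centre⟩ := h.exists_ae_withDensity_closedBall_le
  obtain ⟨K, hK, test⟩ := exists_weakENorm_div_le_of_forall_dyadic h.measurable hZ
    h.isAInftyMeasure hζ h.ae_ne_zero hZ0 (by finiteness : A ^ θ ≠ ⊤)
  refine ⟨K * (2 ^ finrank ℝ V * C), by finiteness, ?_⟩
  filter_upwards [centre, h.ae_ne_zero, h.ae_ne_top] with y hy hy0 hy_top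
  have hμ0 (k : ℤ) : μ (closedBall y (2 ^ k)) ≠ 0 :=
    (measure_closedBall_pos μ y (by positivity)).ne'
  have hμ_top (k : ℤ) : μ (closedBall y (2 ^ k)) ≠ ⊤ := measure_closedBall_lt_top.ne
  refine test θ hθ0 hθ1 y (fun x => (μ (closedBall y (dist x y)) * W y)⁻¹)
    (fun k => 2 ^ finrank ℝ V / (μ (closedBall y (2 ^ k)) * W y)) _
    (fun k => ENNReal.div_ne_zero.2 ⟨by simp, ENNReal.mul_ne_top (hμ_top k) hy_top⟩)
    (fun k => ENNReal.div_ne_top (by finiteness) (mul_ne_zero (hμ0 k) hy0))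
    (fun k x hx _ => ?_) (fun k => ?_) fun k j => ?_
  · rw [addHaar_closedBall_two_zpow, mul_assoc, ← mul_one (2 ^ finrank ℝ V : ℝ≥0∞),
      mul_assoc _ 1, one_mul, ENNReal.mul_div_mul_left _ _ (by simp) (by finiteness), one_div]
    gcongr
  · rw [mul_comm, ← mul_div_assoc]
    refine ENNReal.div_le_of_le_mul ?_
    calc _ ≤ C * μ (closedBall y (2 ^ k)) * W y * 2 ^ finrank ℝ V := by gcongr; exact hy k
      _ = _ := by ring
  · calc _ = 2 ^ finrank ℝ V / W y * ((μ (closedBall y (2 ^ (k + j))))⁻¹ *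
          (μ.withDensity W (closedBall y (2 ^ (k + j))) ^ θ *
            μ (closedBall y (2 ^ (k + j))) ^ (1 - θ))) := by
          rw [div_eq_mul_inv, ENNReal.mul_inv (Or.inl (hμ0 _)) (Or.inl (hμ_top _)), div_eq_mul_inv]
          ring
      _ ≤ 2 ^ finrank ℝ V / W y * (A ^ θ * ((μ (closedBall y (2 ^ k)))⁻¹ *
          (μ.withDensity W (closedBall y (2 ^ k)) ^ θ * μ (closedBall y (2 ^ k)) ^ (1 - θ)))) :=
          mul_le_mul_right (inv_mul_rpow_mul_rpow_le hθ0 (hμ0 _) (hμ_top _) (hμ0 _) (hμ_top _)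
            (comparison y _ (by positivity) _ (closedBall_subset_closedBall
              (zpow_le_zpow_right₀ one_le_two (by simp))) measurableSet_closedBall)) _
      _ = _ := by
          rw [div_eq_mul_inv _ (_ * _), ENNReal.mul_inv (Or.inl (hμ0 _)) (Or.inl (hμ_top _)),
            div_eq_mul_inv]
          ring

end KernelTesting

/-- The multilinear fractional integral with kernel `(∑ i, edist x (y i)) ^ (-β)`, as an
`ℝ≥0∞`-valued operator on nonnegative functions. The paper's `I_α` has `β = m * n - α`. -/
def lfractionalIntegral {V : Type*} [PseudoEMetricSpace V] [MeasurableSpace V] (μ : Measure V)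
    {m : ℕ} (β : ℝ) (f : Fin m → V → ℝ≥0∞) (x : V) : ℝ≥0∞ :=
  ∫⁻ y, (∑ i, edist x (y i)) ^ (-β) * ∏ i, f i (y i) ∂Measure.pi fun _ => μ

/-- The weight `∏ i, u i ^ q * v ^ q` of the mixed inequality, written `ν v^q` in the paper. -/
def mixedWeight {V : Type*} {m : ℕ} (u : Fin m → V → ℝ≥0∞) (v : V → ℝ≥0∞) (q : ℝ) (x : V) :
    ℝ≥0∞ :=
  (∏ i, u i x ^ q) * v x ^ q

theorem IsENNWeight.mixedWeight {V : Type*} [MeasurableSpace V] {μ : Measure V} {m : ℕ}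
    {u : Fin m → V → ℝ≥0∞} {v : V → ℝ≥0∞} (hu : ∀ i, IsENNWeight μ (u i)) (hv : IsENNWeight μ v)
    (q : ℝ) : IsENNWeight μ (mixedWeight u v q) :=
  (IsENNWeight.prod fun i => (hu i).rpow q).mul (hv.rpow q)

/-- Auxiliary weights `U i` and kernels `g i` that factorise the kernel of order `m * d` through `m`
linear weak type `(1, 1)` tests against the mixed weight. -/
structure IsTestFactorization {V : Type*} [PseudoEMetricSpace V] [MeasurableSpace V]
    (μ : Measure V) {m : ℕ} (d q : ℝ) (u : Fin m → V → ℝ≥0∞) (v : V → ℝ≥0∞)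
    (U : Fin m → V → ℝ≥0∞) (g : Fin m → V → V → ℝ≥0∞) : Prop where
  measurable_weight : ∀ i, Measurable (U i)
  measurable_kernel : ∀ i, Measurable (Function.uncurry (g i))
  prod_weight : ∀ x, ∏ i, U i x = ∏ i, u i x ^ (m * q)
  exists_weakENorm_le : ∀ i, ∃ A : ℝ≥0∞, A ≠ ⊤ ∧ ∀ᵐ y ∂μ,
    weakENorm (μ.withDensity (mixedWeight u v q))
      (fun x => U i x * g i x y / mixedWeight u v q x) 1 ≤ A
  exists_rpow_sum_edist_le : ∃ c : ℝ≥0∞, c ≠ ⊤ ∧ ∀ᵐ x ∂μ, ∀ᵐ y ∂Measure.pi fun _ => μ,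
    (∑ i, edist x (y i)) ^ (-(m * d)) ≤ c * ∏ i, g i x (y i) * u i (y i) ^ (m * q)

theorem prod_rpow_mul_div_mixedWeight {V : Type*} {m : ℕ} {u : Fin m → V → ℝ≥0∞} {v : V → ℝ≥0∞}
    {q : ℝ} {x : V} (hu0 : ∀ i, u i x ≠ 0) (hu : ∀ i, u i x ≠ ⊤) :
    (∏ i, u i x ^ (m * q)) / mixedWeight u v q x ^ m = v x ^ (-(m * q)) := by
  have hu' : ∏ i, u i x ^ (m * q) = (∏ i, u i x ^ q) ^ m := by
    simp only [← Finset.prod_pow, ← ENNReal.rpow_mul_natCast, mul_comm q]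
  have h0 : (∏ i, u i x ^ q) ^ m ≠ 0 := by
    simp [Finset.prod_eq_zero_iff, ENNReal.rpow_eq_zero_iff, hu0, hu]
  have ht : (∏ i, u i x ^ q) ^ m ≠ ⊤ :=
    ENNReal.pow_ne_top (ENNReal.prod_ne_top fun i _ => by simp [ENNReal.rpow_eq_top_iff, hu0, hu])
  rw [hu', mixedWeight, mul_pow, ← ENNReal.rpow_mul_natCast, mul_comm q, ENNReal.rpow_neg,
    div_eq_mul_inv, ENNReal.mul_inv (Or.inl h0) (Or.inl ht), ← mul_assoc,
    ENNReal.mul_inv_cancel h0 ht, one_mul]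

section TestFactorization

variable {V : Type*} [PseudoEMetricSpace V] [MeasurableSpace V]
    {μ : Measure V} {m : ℕ} {d q : ℝ} {u : Fin m → V → ℝ≥0∞} {v : V → ℝ≥0∞}
    {U : Fin m → V → ℝ≥0∞} {g : Fin m → V → V → ℝ≥0∞}

theorem IsTestFactorization.exists_rpow_sum_edist_mul_inv_le [NeZero m]
    (h : IsTestFactorization μ d q u v U g) (hu : ∀ i, IsENNWeight μ (u i)) (hq : 0 < q) :
    ∃ c : ℝ≥0∞, c ≠ ⊤ ∧ ∀ᵐ x ∂μ, ∀ᵐ y ∂Measure.pi fun _ => μ,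
      (∑ i, edist x (y i)) ^ (-(d / q)) * (v x)⁻¹ ≤
        c * ∏ i, (U i x * g i x (y i) / mixedWeight u v q x) ^ (m * q)⁻¹ * u i (y i) := by
  obtain ⟨c, hc, hle⟩ := h.exists_rpow_sum_edist_le
  have hm : (0 : ℝ) < m := Nat.cast_pos.2 (NeZero.pos m)
  have hp : 0 < m * q := by positivity
  refine ⟨c ^ (m * q)⁻¹, ENNReal.rpow_ne_top_of_nonneg (by positivity) hc, ?_⟩
  filter_upwards [hle, ae_all_iff.2 fun i => (hu i).ae_ne_zero,
    ae_all_iff.2 fun i => (hu i).ae_ne_top] with x hx hu0 hu_top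
  filter_upwards [hx] with y hy
  have hD := prod_rpow_mul_div_mixedWeight (q := q) (v := v) hu0 hu_top
  have key : (∑ i, edist x (y i)) ^ (-(m * d)) * v x ^ (-(m * q)) ≤
      c * ∏ i, U i x * g i x (y i) / mixedWeight u v q x * u i (y i) ^ (m * q) := calc
    _ ≤ (c * ∏ i, g i x (y i) * u i (y i) ^ (m * q)) *
        ((∏ i, u i x ^ (m * q)) / mixedWeight u v q x ^ m) := by
      rw [hD]
      exact mul_le_mul_left hy _
    _ = _ := by
      simp only [← h.prod_weight, div_eq_mul_inv, Finset.prod_mul_distrib, Finset.prod_const,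
        Finset.card_univ, Fintype.card_fin, ENNReal.inv_pow]
      ring
  have hkey := ENNReal.rpow_le_rpow key (inv_nonneg.2 hp.le)
  simp only [ENNReal.mul_rpow_of_nonneg _ _ (inv_nonneg.2 hp.le),
    ← ENNReal.prod_rpow_of_nonneg (inv_nonneg.2 hp.le), ← ENNReal.rpow_mul, neg_mul,
    mul_inv_cancel₀ hp.ne', ENNReal.rpow_one, ENNReal.rpow_neg_one] at hkey
  rwa [show m * d * (m * q)⁻¹ = d / q by field_simp] at hkey

theorem lintegral_rpow_sum_edist_mul_inv_mul_prod [OpensMeasurableSpace V] {β : ℝ}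
    {f : Fin m → V → ℝ≥0∞} (hf : ∀ i, Measurable (f i)) {a : ℝ≥0∞} (x : V) :
    ∫⁻ y, (∑ i, edist x (y i)) ^ (-β) * a⁻¹ * ∏ i, f i (y i) ∂Measure.pi (fun _ => μ) =
      lfractionalIntegral μ β f x / a := by
  have hmeas : Measurable fun y : Fin m → V =>
      (∑ i, edist x (y i)) ^ (-β) * ∏ i, f i (y i) :=
    ((Finset.measurable_sum _ fun i _ =>
      measurable_edist_right.comp (measurable_pi_apply i)).pow_const _).mul
      (Finset.measurable_prod _ fun i _ => (hf i).comp (measurable_pi_apply i))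
  rw [lfractionalIntegral, div_eq_mul_inv, ← lintegral_mul_const _ hmeas]
  exact lintegral_congr fun y => mul_right_comm _ _ _

theorem IsTestFactorization.exists_weakENorm_tsum_le [OpensMeasurableSpace V]
    [SigmaFinite μ] [NeZero m] (h : IsTestFactorization μ d q u v U g) (hq : 0 < q)
    (hmq : 1 < m * q) (hu : ∀ i, IsENNWeight μ (u i)) (hv : IsENNWeight μ v)
    {ι : Fin m → Type*} [∀ i, Countable (ι i)] :
    ∃ C : ℝ≥0∞, C ≠ ⊤ ∧ ∀ r : ℝ, 1 ≤ r → ∀ f : ∀ i, ι i → V → ℝ≥0∞,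
      (∀ i k, Measurable (f i k)) →
        weakENorm (μ.withDensity (mixedWeight u v q)) (fun x => (∑' k : ∀ i, ι i,
            (lfractionalIntegral μ (d / q) (fun i => f i (k i)) x / v x) ^ r) ^ (1 / r)) q ≤
          C * ∏ i, ∫⁻ y, u i y * (∑' k, f i k y ^ r) ^ (1 / r) ∂μ := by
  have hp : 0 < m * q := zero_lt_one.trans hmq
  have hD := IsENNWeight.mixedWeight hu hv q
  have : SigmaFinite (μ.withDensity (mixedWeight u v q)) :=
    SigmaFinite.withDensity_of_ne_top hD.ae_ne_top
  choose A hA test using h.exists_weakENorm_le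
  obtain ⟨c, hc, hκ⟩ := h.exists_rpow_sum_edist_mul_inv_le hu hq
  obtain ⟨C, hC, bound⟩ := exists_weakENorm_tsum_lintegral_mul_prod_le
    (μ := μ.withDensity (mixedWeight u v q)) (ν := μ) (ι := ι) hmq
    (K := fun i x y => (U i x * g i x y / mixedWeight u v q x) ^ (m * q)⁻¹)
    (fun i => ((((h.measurable_weight i).comp measurable_fst).mul (h.measurable_kernel i)).div
      (hD.measurable.comp measurable_fst)).pow_const _)
    (A := ∑ i, A i ^ (m * q)⁻¹)
    (ENNReal.sum_ne_top.2 fun i _ => ENNReal.rpow_ne_top_of_nonneg (by positivity) (hA i))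
    (fun i => (test i).mono fun y hy => by
      rw [weakENorm_rpow (inv_pos.2 hp), mul_inv_cancel₀ hp.ne']
      exact (ENNReal.rpow_le_rpow hy (by positivity)).trans
        (Finset.single_le_sum_of_canonicallyOrdered (f := fun i => A i ^ (m * q)⁻¹)
          (Finset.mem_univ i)))
    (fun i => (hu i).measurable) hc ((withDensity_absolutelyContinuous μ _).ae_le hκ)
  refine ⟨C, hC, fun r hr f hf => ?_⟩
  have hm : (m : ℝ) ≠ 0 := NeZero.ne _
  simpa only [lintegral_rpow_sum_edist_mul_inv_mul_prod fun i => hf i _,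
    mul_div_cancel_left₀ q hm] using bound r hr f hf

end TestFactorization

/-- The multilinear Muckenhoupt class `A_{(1,…,1)}` with respect to `μ`, tested on closed balls. -/
structure IsMultilinearMuckenhouptOne {V : Type*} [PseudoMetricSpace V] [MeasurableSpace V]
    (μ : Measure V) {m : ℕ} (w : Fin m → V → ℝ≥0∞) : Prop where
  isENNWeight : ∀ i, IsENNWeight μ (w i)
  exists_bound : ∃ C : ℝ≥0∞, C ≠ ⊤ ∧ ∀ x r, 0 < r →
    (∫⁻ y in Metric.closedBall x r, ∏ i, w i y ^ (m : ℝ)⁻¹ ∂μ) ^ m ≤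
      C * μ (Metric.closedBall x r) ^ m *
        ∏ i, essInf (w i) (μ.restrict (Metric.closedBall x r))

section MultilinearMuckenhoupt

open Metric Module

theorem measurable_measure_closedBall_dist {V : Type*} [PseudoMetricSpace V] [MeasurableSpace V]
    [OpensMeasurableSpace V] [SecondCountableTopology V] (ω : Measure V) [SFinite ω] :
    Measurable fun p : V × V => ω (closedBall p.2 (dist p.1 p.2)) := by
  have hs : MeasurableSet {b : (V × V) × V | dist b.2 b.1.2 ≤ dist b.1.1 b.1.2} :=
    (isClosed_le (by fun_prop) (by fun_prop)).measurableSet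
  exact measurable_measure_prodMk_left hs

theorem IsMultilinearMuckenhouptOne.isMuckenhouptOne {V : Type*} [PseudoMetricSpace V]
    [MeasurableSpace V] [OpensMeasurableSpace V] {μ : Measure V} {m : ℕ} [NeZero m]
    {w : Fin m → V → ℝ≥0∞} (h : IsMultilinearMuckenhouptOne μ w) :
    IsMuckenhouptOne μ fun x => ∏ i, w i x ^ (m : ℝ)⁻¹ where
  toIsENNWeight := .prod fun i => (h.isENNWeight i).rpow _
  exists_bound := by
    obtain ⟨C, hC, hle⟩ := h.exists_bound
    have hm : (m : ℝ) ≠ 0 := NeZero.ne _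
    refine ⟨C ^ (m : ℝ)⁻¹, ENNReal.rpow_ne_top_of_nonneg (by positivity) hC, fun x r hr => ?_⟩
    have hess (i : Fin m) : ∀ᵐ z ∂μ, z ∈ closedBall x r →
        essInf (w i) (μ.restrict (closedBall x r)) ≤ w i z :=
      (ae_restrict_iff' measurableSet_closedBall).1 ae_essInf_le
    filter_upwards [ae_all_iff.2 hess] with z hz hzB
    rw [← ENNReal.pow_le_pow_left_iff (NeZero.ne m)]
    calc _ ≤ C * μ (closedBall x r) ^ m * ∏ i, w i z :=
          (hle x r hr).trans (mul_le_mul_right (Finset.prod_le_prod' fun i _ => hz i hzB) _)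
      _ = _ := by
        simp only [mul_pow, ← Finset.prod_pow, ← ENNReal.rpow_mul_natCast, inv_mul_cancel₀ hm,
          ENNReal.rpow_one]

theorem IsMultilinearMuckenhouptOne.exists_ae_withDensity_pow_le {V : Type*}
    [PseudoMetricSpace V] [MeasurableSpace V] [OpensMeasurableSpace V] {μ : Measure V}
    [SigmaFinite μ] {m : ℕ} {w : Fin m → V → ℝ≥0∞} (h : IsMultilinearMuckenhouptOne μ w) :
    ∃ C : ℝ≥0∞, C ≠ ⊤ ∧ ∀ x, ∀ᵐ y ∂Measure.pi fun _ => μ, ∀ k : ℤ,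
      (∀ i, y i ∈ closedBall x (2 ^ k)) →
        (μ.withDensity (fun z => ∏ i, w i z ^ (m : ℝ)⁻¹) (closedBall x (2 ^ k))) ^ m ≤
          C * μ (closedBall x (2 ^ k)) ^ m * ∏ i, w i (y i) := by
  obtain ⟨C, hC, hle⟩ := h.exists_bound
  refine ⟨C, hC, fun x => ?_⟩
  have hess (k : ℤ) (i : Fin m) : ∀ᵐ z ∂μ, z ∈ closedBall x (2 ^ k) →
      essInf (w i) (μ.restrict (closedBall x (2 ^ k))) ≤ w i z :=
    (ae_restrict_iff' measurableSet_closedBall).1 ae_essInf_le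
  filter_upwards [ae_all_iff.2 fun k => ae_all_iff.2 fun i =>
    Measure.tendsto_eval_ae_ae.eventually (hess k i)] with y hy k hyk
  rw [withDensity_apply _ measurableSet_closedBall]
  exact (hle x _ (by positivity)).trans
    (mul_le_mul_right (Finset.prod_le_prod' fun i _ => hy k i (hyk i)) _)

theorem sum_edist_eq_ofReal {V : Type*} [PseudoMetricSpace V] {ι : Type*} (s : Finset ι) (x : V)
    (y : ι → V) : ∑ i ∈ s, edist x (y i) = ENNReal.ofReal (∑ i ∈ s, dist x (y i)) := by
  simp only [edist_dist, ENNReal.ofReal_sum_of_nonneg fun _ _ => dist_nonneg]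

variable {V : Type*} [NormedAddCommGroup V] [NormedSpace ℝ V] [FiniteDimensional ℝ V]
  [MeasurableSpace V] [BorelSpace V] {μ : Measure V} [μ.IsAddHaarMeasure] {m : ℕ}

theorem exists_closedBall_zpow_superset {ι : Type*} [Fintype ι] {x : V} {y : ι → V}
    (hxy : 0 < ∑ i, dist x (y i)) :
    ∃ k : ℤ, (∀ i, closedBall (y i) (dist x (y i)) ⊆ closedBall x (2 ^ k)) ∧
      μ (closedBall x (2 ^ k)) ≤
        (∑ i, edist x (y i)) ^ finrank ℝ V * (4 ^ finrank ℝ V * μ (closedBall 0 1)) := by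
  obtain ⟨k, hkR, hRk⟩ := exists_mem_Ioc_zpow hxy (one_lt_two (α := ℝ))
  have hk : (2 : ℝ) ^ (k + 2) = 4 * 2 ^ k := by rw [zpow_add₀ two_ne_zero]; ring
  rw [zpow_add_one₀ two_ne_zero] at hRk
  refine ⟨k + 2, fun i => closedBall_subset_closedBall' ?_, ?_⟩
  · have : dist x (y i) ≤ ∑ i, dist x (y i) :=
      Finset.single_le_sum (f := fun i => dist x (y i)) (fun _ _ => dist_nonneg)
        (Finset.mem_univ i)
    rw [dist_comm (y i) x]
    linarith
  · calc μ (closedBall x (2 ^ (k + 2)))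
        ≤ μ (closedBall x ((∑ i, dist x (y i)) * 4 * 1)) :=
          measure_mono (closedBall_subset_closedBall (by linarith))
      _ = _ := by
        rw [addHaar_closedBall_mul_eq x 0 (by positivity) zero_le_one,
          ENNReal.ofReal_mul hxy.le, mul_pow, sum_edist_eq_ofReal, ENNReal.ofReal_ofNat, mul_assoc]

theorem IsMultilinearMuckenhouptOne.exists_rpow_sum_edist_le [Nontrivial V] [NeZero m]
    {w : Fin m → V → ℝ≥0∞} (h : IsMultilinearMuckenhouptOne μ w) :
    ∃ c : ℝ≥0∞, c ≠ ⊤ ∧ ∀ x, ∀ᵐ y ∂Measure.pi fun _ => μ,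
      (∑ i, edist x (y i)) ^ (-(m * finrank ℝ V : ℝ)) ≤ c * ∏ i,
        (μ.withDensity (fun z => ∏ i, w i z ^ (m : ℝ)⁻¹) (closedBall (y i) (dist x (y i))))⁻¹ *
          w i (y i) := by
  set W := fun z => ∏ i, w i z ^ (m : ℝ)⁻¹
  obtain ⟨C, hC, hle⟩ := h.exists_ae_withDensity_pow_le
  have hW := h.isMuckenhouptOne
  have hball : μ (closedBall (0 : V) 1) ≠ ⊤ := measure_closedBall_lt_top.ne
  refine ⟨C * (4 ^ finrank ℝ V * μ (closedBall (0 : V) 1)) ^ m, by finiteness, fun x => ?_⟩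
  have hne : ∀ᵐ z ∂μ, z ≠ x := compl_mem_ae_iff.2 (measure_singleton x)
  filter_upwards [hle x, ae_all_iff.2 fun i : Fin m =>
    Measure.tendsto_eval_ae_ae.eventually hne] with y hy hyx
  have hdist_pos (i : Fin m) : 0 < dist x (y i) := dist_pos.2 (hyx i).symm
  obtain ⟨k, hsub, hB⟩ := exists_closedBall_zpow_superset (μ := μ) (x := x) (y := y)
    (Finset.sum_pos (fun i _ => hdist_pos i) Finset.univ_nonempty)
  set B := closedBall x (2 ^ k)
  set X : Fin m → ℝ≥0∞ := fun i => μ.withDensity W (closedBall (y i) (dist x (y i)))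
  have hX0 (i : Fin m) : X i ≠ 0 :=
    withDensity_closedBall_ne_zero hW.measurable hW.ae_ne_zero _ (hdist_pos i)
  have hX : ∏ i, X i ≠ ⊤ :=
    ENNReal.prod_ne_top fun i _ => hW.isAInftyMeasure.closedBall_ne_top _ _
  have key : ∏ i, X i ≤ (∑ i, edist x (y i)) ^ (m * finrank ℝ V : ℝ) *
      (C * (4 ^ finrank ℝ V * μ (closedBall (0 : V) 1)) ^ m * ∏ i, w i (y i)) := calc
    _ ≤ μ.withDensity W B ^ m := by
      simpa using Finset.prod_le_pow_card Finset.univ X _ fun i _ => measure_mono (hsub i)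
    _ ≤ C * μ B ^ m * ∏ i, w i (y i) :=
      hy k fun i => hsub i (mem_closedBall_self dist_nonneg)
    _ ≤ C * ((∑ i, edist x (y i)) ^ finrank ℝ V *
        (4 ^ finrank ℝ V * μ (closedBall (0 : V) 1))) ^ m * ∏ i, w i (y i) := by gcongr
    _ = _ := by
      rw [mul_pow, ← pow_mul', ← Nat.cast_mul, ENNReal.rpow_natCast]
      ring
  rw [Finset.prod_mul_distrib, ← ENNReal.prod_inv_distrib fun i _ j _ _ => Or.inl (hX0 i),
    mul_left_comm, ← ENNReal.div_eq_inv_mul, ENNReal.rpow_neg,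
    ENNReal.le_div_iff_mul_le (Or.inl (Finset.prod_ne_zero_iff.2 fun i _ => hX0 i)) (Or.inl hX),
    ← ENNReal.div_eq_inv_mul]
  exact ENNReal.div_le_of_le_mul' key

theorem IsMultilinearMuckenhouptOne.isTestFactorization [Nontrivial V] [NeZero m] {q : ℝ}
    {u : Fin m → V → ℝ≥0∞} {v : V → ℝ≥0∞}
    (h : IsMultilinearMuckenhouptOne μ fun i x => u i x ^ (m * q))
    (hu : ∀ i, IsENNWeight μ (u i)) (hv : IsENNWeight μ v)
    (hD : IsAInftyMeasure μ (μ.withDensity (mixedWeight u v q))) :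
    IsTestFactorization μ (finrank ℝ V) q u v (fun _ x => ∏ i, u i x ^ q) fun _ x y =>
      (μ.withDensity (fun z => ∏ i, u i z ^ q) (closedBall y (dist x y)))⁻¹ := by
  have hm : (m : ℝ) ≠ 0 := NeZero.ne _
  have hW := h.isMuckenhouptOne
  obtain ⟨c, hc, kernel⟩ := h.exists_rpow_sum_edist_le
  simp only [← ENNReal.rpow_mul, mul_right_comm (m : ℝ) q, mul_inv_cancel₀ hm, one_mul] at hW kernel
  have := SigmaFinite.withDensity_of_ne_top hW.ae_ne_top
  refine ⟨fun _ => hW.measurable, fun _ => (measurable_measure_closedBall_dist _).inv,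
    fun x => ?_, fun _ => ?_, c, hc, .of_forall kernel⟩
  · simp [← ENNReal.rpow_mul_natCast, mul_comm q, ← Finset.prod_pow]
  · have hD' := IsENNWeight.mixedWeight hu hv q
    obtain ⟨A, hA, test⟩ := exists_weakENorm_inv_measure_closedBall_div_le hW.measurable
      hD'.measurable hW.isAInftyMeasure hD hW.ae_ne_zero hD'.ae_ne_zero
    exact ⟨A, hA, .of_forall test⟩

end MultilinearMuckenhoupt

section MuckenhouptOneProduct

open Metric Module

theorem rpow_mul_prod_update_rpow_eq_mixedWeight {V : Type*} {m : ℕ} [NeZero m] {q : ℝ}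
    (u : Fin m → V → ℝ≥0∞) (v : V → ℝ≥0∞) (i : Fin m) (x : V) :
    (u i x ^ (m * q)) ^ (m : ℝ)⁻¹ * ∏ j,
      Function.update (fun j x => u j x ^ (m * q)) i (fun x => v x ^ (m * q)) j x ^ (m : ℝ)⁻¹ =
        mixedWeight u v q x := by
  have hm : (m : ℝ) ≠ 0 := NeZero.ne _
  have hpow (a : ℝ≥0∞) : (a ^ (m * q)) ^ (m : ℝ)⁻¹ = a ^ q := by
    rw [← ENNReal.rpow_mul, mul_right_comm, mul_inv_cancel₀ hm, one_mul]
  rw [mixedWeight, Fintype.prod_eq_mul_prod_compl i, Fintype.prod_eq_mul_prod_compl i,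
    Function.update_self, hpow, hpow, Finset.prod_congr rfl fun j hj => by
      rw [Function.update_of_ne (by simpa using hj), hpow]]
  ring

variable {V : Type*} [NormedAddCommGroup V] [NormedSpace ℝ V] [FiniteDimensional ℝ V]
  [MeasurableSpace V] [BorelSpace V] {μ : Measure V} [μ.IsAddHaarMeasure] {m : ℕ}

theorem prod_measure_closedBall_dist_le (x : V) (y : Fin m → V) :
    ∏ i, μ (closedBall (y i) (dist x (y i))) ≤
      (∑ i, edist x (y i)) ^ (m * finrank ℝ V : ℝ) * μ (closedBall 0 1) ^ m := by
  have hball (i : Fin m) : μ (closedBall (y i) (dist x (y i))) =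
      edist x (y i) ^ finrank ℝ V * μ (closedBall 0 1) := by
    rw [← mul_one (dist x (y i)), addHaar_closedBall_mul_eq _ 0 dist_nonneg zero_le_one, edist_dist]
  calc _ = (∏ i, edist x (y i)) ^ finrank ℝ V * μ (closedBall 0 1) ^ m := by
        simp [hball, Finset.prod_mul_distrib, Finset.prod_pow]
    _ ≤ ((∑ i, edist x (y i)) ^ m) ^ finrank ℝ V * μ (closedBall 0 1) ^ m := by
        gcongr
        simpa using Finset.prod_le_pow_card Finset.univ _ _ fun i hi =>
          Finset.single_le_sum_of_canonicallyOrdered (f := fun i => edist x (y i)) hi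
    _ = _ := by rw [← pow_mul, ← Nat.cast_mul, ENNReal.rpow_natCast]

theorem rpow_sum_edist_le_prod_inv_measure_closedBall (x : V) (y : Fin m → V) :
    (∑ i, edist x (y i)) ^ (-(m * finrank ℝ V : ℝ)) ≤
      μ (closedBall 0 1) ^ m * ∏ i, (μ (closedBall (y i) (dist x (y i))))⁻¹ := by
  have hc0 : μ (closedBall (0 : V) 1) ^ m ≠ 0 :=
    pow_ne_zero _ (measure_closedBall_pos μ 0 one_pos).ne'
  have hc : μ (closedBall (0 : V) 1) ^ m ≠ ⊤ := ENNReal.pow_ne_top measure_closedBall_lt_top.ne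
  rw [ENNReal.rpow_neg, ← ENNReal.prod_inv_distrib fun i _ j _ _ =>
    Or.inr measure_closedBall_lt_top.ne]
  calc _ = μ (closedBall 0 1) ^ m *
        ((∑ i, edist x (y i)) ^ (m * finrank ℝ V : ℝ) * μ (closedBall 0 1) ^ m)⁻¹ := by
        rw [ENNReal.mul_inv (Or.inr hc) (Or.inr hc0), mul_left_comm, ENNReal.mul_inv_cancel hc0 hc,
          mul_one]
    _ ≤ _ := mul_le_mul_right (ENNReal.inv_le_inv.2 (prod_measure_closedBall_dist_le x y)) _

theorem isTestFactorization_of_isMuckenhouptOne [Nontrivial V] [NeZero m] {q P : ℝ} (hP : 1 < P)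
    {u : Fin m → V → ℝ≥0∞} {v : V → ℝ≥0∞}
    (hu : ∀ i, IsMuckenhouptOne μ fun x => u i x ^ (m * q))
    (hv : IsMuckenhoupt μ P fun x => v x ^ (m * q)) :
    IsTestFactorization μ (finrank ℝ V) q u v (fun i x => u i x ^ (m * q)) fun i x y =>
      (μ (closedBall y (dist x y)) * u i y ^ (m * q))⁻¹ := by
  have hm : (1 : ℝ) ≤ m := Nat.one_le_cast.2 (NeZero.pos m)
  refine ⟨fun i => (hu i).measurable, fun i => ((measurable_measure_closedBall_dist _).mul
    ((hu i).measurable.comp measurable_snd)).inv, fun x => rfl, fun i => ?_,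
    μ (closedBall 0 1) ^ m, ENNReal.pow_ne_top measure_closedBall_lt_top.ne, .of_forall fun x => ?_⟩
  · have hZ : IsMuckenhoupt μ P fun x => ∏ j, Function.update (fun j x => u j x ^ (m * q)) i
        (fun x => v x ^ (m * q)) j x ^ (m : ℝ)⁻¹ :=
      .prod_rpow_inv hP <| (Function.forall_update_iff _ fun _ w => IsMuckenhoupt μ P w).2
        ⟨hv, fun j _ => (hu j).isMuckenhoupt hP⟩
    have test := (hu i).exists_ae_weakENorm_div_le hZ.measurable (hZ.isAInftyMeasure hP)
      hZ.ae_ne_zero (θ := 1 - (m : ℝ)⁻¹) (sub_nonneg.2 (inv_le_one_of_one_le₀ hm))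
      (sub_le_self _ (by positivity))
    simpa only [_root_.sub_sub_cancel, rpow_mul_prod_update_rpow_eq_mixedWeight] using test
  · filter_upwards [ae_all_iff.2 fun i => Measure.tendsto_eval_ae_ae.eventually (hu i).ae_ne_zero,
      ae_all_iff.2 fun i => Measure.tendsto_eval_ae_ae.eventually (hu i).ae_ne_top] with y h0 h_top
    refine (rpow_sum_edist_le_prod_inv_measure_closedBall (μ := μ) x y).trans_eq ?_
    congr! 2 with i
    rw [ENNReal.mul_inv (Or.inr (h_top i)) (Or.inr (h0 i)), mul_assoc,
      ENNReal.inv_mul_cancel (h0 i) (h_top i), mul_one]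

end MuckenhouptOneProduct

/-- The positive part of `w`, as an `ℝ≥0∞`-valued function on `Fin n → ℝ`. The sup norm on that
space makes its closed balls the cubes of `ESp n`. -/
def coordENNReal {n : ℕ} (w : ESp n → ℝ) (x : Fin n → ℝ) : ℝ≥0∞ :=
  ENNReal.ofReal (w (WithLp.toLp 2 x))

section CubeTransfer

open Metric WithLp

theorem essInf_comp_of_measurePreserving {X Y : Type*} [MeasurableSpace X] [MeasurableSpace Y]
    {μ : Measure X} {ν : Measure Y} {g : X → Y} (hg : MeasurePreserving g μ ν)
    (hge : MeasurableEmbedding g) (f : Y → ℝ≥0∞) : essInf (fun x => f (g x)) μ = essInf f ν := by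
  have hae : ae ν = Filter.map g (ae μ) := by
    ext s
    rw [← hg.map_eq]
    exact hge.ae_map_iff
  rw [essInf, essInf, hae]
  rfl

variable {n : ℕ} {w : ESp n → ℝ}

theorem isCube_preimage_ofLp_closedBall (x : Fin n → ℝ) {r : ℝ} (hr : 0 < r) :
    IsCube (ofLp ⁻¹' closedBall x r : Set (ESp n)) := by
  refine ⟨fun i => x i - r, 2 * r, by positivity, ?_⟩
  ext z
  simp only [mem_preimage, mem_closedBall, dist_pi_le_iff hr.le, Real.dist_eq, abs_le,
    Set.mem_ofPred_eq]
  refine forall_congr' fun i => and_congr ⟨?_, ?_⟩ ⟨?_, ?_⟩ <;> intro h <;> linarith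

theorem lintegral_toLp (f : ESp n → ℝ≥0∞) : ∫⁻ x, f (toLp 2 x) = ∫⁻ z, f z :=
  (PiLp.volume_preserving_toLp (Fin n)).lintegral_comp_emb
    (MeasurableEquiv.toLp 2 _).measurableEmbedding f

theorem setLIntegral_toLp (f : ESp n → ℝ≥0∞) (s : Set (Fin n → ℝ)) :
    ∫⁻ x in s, f (toLp 2 x) = ∫⁻ z in ofLp ⁻¹' s, f z :=
  (PiLp.volume_preserving_toLp (Fin n)).setLIntegral_comp_preimage_emb
    (MeasurableEquiv.toLp 2 _).measurableEmbedding f (ofLp ⁻¹' s)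

theorem volume_preimage_ofLp (s : Set (Fin n → ℝ)) :
    volume (ofLp ⁻¹' s : Set (ESp n)) = volume s :=
  (PiLp.volume_preserving_ofLp (Fin n)).measure_preimage_equiv
    (f := (MeasurableEquiv.toLp 2 _).symm) s

theorem essInf_coordENNReal (w : ESp n → ℝ) (s : Set (Fin n → ℝ)) :
    essInf (coordENNReal w) (volume.restrict s) =
      essInf (fun z => ENNReal.ofReal (w z)) (volume.restrict (ofLp ⁻¹' s)) :=
  essInf_comp_of_measurePreserving ((PiLp.volume_preserving_toLp (Fin n)).restrict_preimage_emb
    (MeasurableEquiv.toLp 2 _).measurableEmbedding (ofLp ⁻¹' s))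
    (MeasurableEquiv.toLp 2 _).measurableEmbedding fun z => ENNReal.ofReal (w z)

theorem setLIntegral_coordENNReal (w : ESp n → ℝ) (s : Set (Fin n → ℝ)) :
    ∫⁻ x in s, coordENNReal w x = ∫⁻ z in ofLp ⁻¹' s, ENNReal.ofReal (w z) :=
  setLIntegral_toLp (fun z => ENNReal.ofReal (w z)) s

theorem coordENNReal_rpow (hw : ∀ x, 0 ≤ w x) {s : ℝ} (hs : 0 ≤ s) :
    coordENNReal (fun x => w x ^ s) = fun x => coordENNReal w x ^ s :=
  funext fun _ => (ENNReal.ofReal_rpow_of_nonneg (hw _) hs).symm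

theorem coordENNReal_prod_rpow {ι : Type*} [Fintype ι] {w : ι → ESp n → ℝ} (hw : ∀ i x, 0 ≤ w i x)
    {s : ℝ} (hs : 0 ≤ s) :
    coordENNReal (fun x => ∏ i, w i x ^ s) = fun x => ∏ i, coordENNReal (w i) x ^ s := by
  ext x
  simp only [← congrFun (coordENNReal_rpow (hw _) hs) x]
  exact ENNReal.ofReal_prod_of_nonneg fun i _ => Real.rpow_nonneg (hw i _) s

theorem coordENNReal_mixedWeight {m : ℕ} {u : Fin m → ESp n → ℝ} {v : ESp n → ℝ}
    (hu : ∀ i x, 0 ≤ u i x) (hv : ∀ x, 0 ≤ v x) {q : ℝ} (hq : 0 ≤ q) :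
    coordENNReal (fun x => (∏ i, u i x ^ q) * v x ^ q) =
      mixedWeight (fun i => coordENNReal (u i)) (coordENNReal v) q := by
  ext x
  rw [mixedWeight, ← congrFun (coordENNReal_prod_rpow hu hq) x,
    ← congrFun (coordENNReal_rpow hv hq) x]
  exact ENNReal.ofReal_mul (Finset.prod_nonneg fun i _ => Real.rpow_nonneg (hu i _) q)

theorem IsWeight.isENNWeight (hw : IsWeight w) : IsENNWeight volume (coordENNReal w) where
  measurable := (hw.1.comp (measurable_toLp 2 _)).ennreal_ofReal
  ae_ne_zero := by
    filter_upwards [(PiLp.volume_preserving_toLp (Fin n)).quasiMeasurePreserving.ae hw.2.2.1]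
      with x hx
    exact (ENNReal.ofReal_pos.2 hx).ne'
  ae_ne_top := .of_forall fun _ => ENNReal.ofReal_ne_top

theorem IsA1.isMuckenhouptOne (h : IsA1 w) (hw : IsENNWeight volume (coordENNReal w)) :
    IsMuckenhouptOne volume (coordENNReal w) where
  toIsENNWeight := hw
  exists_bound := by
    obtain ⟨C, hC, hle⟩ := h
    refine ⟨C, hC.ne, fun x r hr => ?_⟩
    have hB := hle _ (isCube_preimage_ofLp_closedBall x hr)
    rw [volume_preimage_ofLp, wMeas, ← setLIntegral_coordENNReal, ← essInf_coordENNReal,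
      ENNReal.inv_mul_le_iff (measure_closedBall_pos volume x hr).ne'
        measure_closedBall_lt_top.ne, mul_left_comm, ← mul_assoc] at hB
    have hess : ∀ᵐ z, z ∈ closedBall x r →
        essInf (coordENNReal w) (volume.restrict (closedBall x r)) ≤ coordENNReal w z :=
      (ae_restrict_iff' measurableSet_closedBall).1 ae_essInf_le
    filter_upwards [hess] with z hz hzB
    exact hB.trans (mul_le_mul_right (hz hzB) _)

theorem IsAp.isMuckenhoupt {P : ℝ} (h : IsAp w P) (hP : 1 < P)
    (hw : IsENNWeight volume (coordENNReal w)) : IsMuckenhoupt volume P (coordENNReal w) where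
  toIsENNWeight := hw
  exists_bound := by
    obtain ⟨C, hC, hle⟩ := h
    refine ⟨C, hC.ne, fun x r hr => ?_⟩
    have hP1 : 0 < P - 1 := sub_pos.2 hP
    have hB := hle _ (isCube_preimage_ofLp_closedBall x hr)
    rw [volume_preimage_ofLp, wMeas, ← setLIntegral_coordENNReal, ← setLIntegral_toLp,
      show 1 - P / (P - 1) = -(1 / (P - 1)) by field_simp; ring,
      ENNReal.mul_rpow_of_nonneg _ _ hP1.le, mul_mul_mul_comm, ENNReal.inv_rpow] at hB
    have hV0 : volume (closedBall x r) ≠ 0 := (measure_closedBall_pos volume x hr).ne'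
    have hV : volume (closedBall x r) ≠ ⊤ := measure_closedBall_lt_top.ne
    have hVP : (volume (closedBall x r))⁻¹ * (volume (closedBall x r) ^ (P - 1))⁻¹ =
        (volume (closedBall x r) ^ P)⁻¹ := by
      rw [← ENNReal.rpow_neg_one, ← ENNReal.rpow_neg, ← ENNReal.rpow_neg,
        ← ENNReal.rpow_add _ _ hV0 hV]
      ring_nf
    rw [hVP, ENNReal.inv_mul_le_iff (by simp [hV0, hV]) (by finiteness), mul_comm (_ ^ P)] at hB
    exact hB

theorem IsAinfty.exists_isMuckenhoupt (h : IsAinfty w)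
    (hw : IsENNWeight volume (coordENNReal w)) :
    ∃ P : ℝ, 1 < P ∧ IsMuckenhoupt volume P (coordENNReal w) := by
  rcases h with h | ⟨P, hP, h⟩
  · exact ⟨2, one_lt_two, (h.isMuckenhouptOne hw).isMuckenhoupt one_lt_two⟩
  · exact ⟨P, hP, h.isMuckenhoupt hP hw⟩

theorem essInf_restrict_closedBall_ne_top {f : (Fin n → ℝ) → ℝ≥0∞}
    (hf : ∀ᵐ x, f x ≠ ⊤) (x : Fin n → ℝ) {r : ℝ} (hr : 0 < r) :
    essInf f (volume.restrict (closedBall x r)) ≠ ⊤ := by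
  have : (ae (volume.restrict (closedBall x r))).NeBot :=
    ae_restrict_neBot.2 (measure_closedBall_pos volume x hr).ne'
  have hess := ae_essInf_le (f := f) (μ := volume.restrict (closedBall x r))
  obtain ⟨z, hz, hz_top⟩ := (hess.and (ae_restrict_of_ae hf)).exists
  exact ne_top_of_le_ne_top hz_top hz

theorem A11.isMultilinearMuckenhouptOne {m : ℕ} {w : Fin m → ESp n → ℝ} (h : A11 w)
    (hw : ∀ i, IsENNWeight volume (coordENNReal (w i))) (hw0 : ∀ i x, 0 ≤ w i x) :
    IsMultilinearMuckenhouptOne volume fun i => coordENNReal (w i) where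
  isENNWeight := hw
  exists_bound := by
    obtain ⟨C, hC, hle⟩ := h
    refine ⟨C, hC.ne, fun x r hr => ?_⟩
    have hV0 : volume (closedBall x r) ^ m ≠ 0 :=
      pow_ne_zero _ (measure_closedBall_pos volume x hr).ne'
    have hV : volume (closedBall x r) ^ m ≠ ⊤ := ENNReal.pow_ne_top measure_closedBall_lt_top.ne
    have he (i : Fin m) := essInf_restrict_closedBall_ne_top (hw i).ae_ne_top x hr
    have hB := hle _ (isCube_preimage_ofLp_closedBall x hr)
    simp only [volume_preimage_ofLp, ← setLIntegral_coordENNReal, ← essInf_coordENNReal,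
      coordENNReal_prod_rpow hw0 (inv_nonneg.2 m.cast_nonneg), ENNReal.rpow_natCast, mul_pow,
      ← ENNReal.inv_pow] at hB
    rw [← ENNReal.prod_inv_distrib fun i _ j _ _ => Or.inr (he j), mul_assoc,
      ENNReal.inv_mul_le_iff hV0 hV, mul_comm (_ ^ m) C, ← div_eq_mul_inv] at hB
    exact (ENNReal.div_le_iff_le_mul (Or.inr (by finiteness))
      (Or.inl (ENNReal.prod_ne_top fun i _ => he i))).1 hB

end CubeTransfer

section MixedInequality

open Metric WithLp Module

variable {n m : ℕ}

theorem wnorm_le_weakENorm (g : ESp n → ℝ≥0∞) (w : ESp n → ℝ) {q : ℝ} (hq : 0 ≤ q) :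
    wnorm g q w ≤
      weakENorm (volume.withDensity (coordENNReal w)) (fun x => g (toLp 2 x)) q := by
  refine iSup₂_le fun t _ => le_trans ?_ (le_weakENorm (ENNReal.ofReal t))
  gcongr _ * ?_ ^ _
  exact (setLIntegral_coordENNReal w {x | ENNReal.ofReal t < g (toLp 2 x)}).symm.trans_le
    (withDensity_apply_le _ _)

theorem lintegral_pi_toLp (f : (Fin m → ESp n) → ℝ≥0∞) :
    ∫⁻ y : Fin m → Fin n → ℝ, f (fun i => toLp 2 (y i)) = ∫⁻ z, f z :=
  (volume_preserving_pi fun _ => PiLp.volume_preserving_toLp (Fin n)).lintegral_comp_emb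
    (MeasurableEquiv.piCongrRight fun _ => MeasurableEquiv.toLp 2 _).measurableEmbedding f

theorem ofReal_abs_div_rpow_sum_dist_le {β : ℝ} (hβ : 0 < β) (c : ℝ) (x : Fin n → ℝ)
    (y : Fin m → Fin n → ℝ) :
    ENNReal.ofReal |c / (∑ i, dist (toLp 2 x) (toLp 2 (y i))) ^ β| ≤
      (∑ i, edist x (y i)) ^ (-β) * ENNReal.ofReal |c| := by
  have hle : ∑ i, edist x (y i) ≤ ENNReal.ofReal (∑ i, dist (toLp 2 x) (toLp 2 (y i))) := by
    rw [← sum_edist_eq_ofReal]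
    gcongr with i
    simpa using PiLp.lipschitzWith_ofLp 2 (fun _ : Fin n => ℝ) (toLp 2 x) (toLp 2 (y i))
  rcases (Finset.sum_nonneg fun i _ => dist_nonneg :
    0 ≤ ∑ i, dist (toLp 2 x) (toLp 2 (y i))).eq_or_lt with h0 | hpos
  · simp [← h0, Real.zero_rpow hβ.ne']
  · rw [abs_div, abs_of_pos (Real.rpow_pos_of_pos hpos β),
      ENNReal.ofReal_div_of_pos (Real.rpow_pos_of_pos hpos β), div_eq_mul_inv, mul_comm,
      ENNReal.rpow_neg, ← ENNReal.ofReal_rpow_of_pos hpos]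
    gcongr

theorem ofReal_abs_multiIα_le {α : ℝ} (hα : α < m * n) (f : Fin m → ESp n → ℝ)
    (x : Fin n → ℝ) :
    ENNReal.ofReal |multiIα α f (toLp 2 x)| ≤
      lfractionalIntegral volume (m * n - α) (fun i => coordENNReal fun z => |f i z|) x := by
  rw [multiIα, ← Real.enorm_eq_ofReal_abs]
  refine (enorm_integral_le_lintegral_enorm _).trans ?_
  rw [← lintegral_pi_toLp]
  refine lintegral_mono fun y => ?_
  rw [Real.enorm_eq_ofReal_abs]
  refine (ofReal_abs_div_rpow_sum_dist_le (sub_pos.2 hα) _ x y).trans_eq ?_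
  rw [Finset.abs_prod, ENNReal.ofReal_prod_of_nonneg fun _ _ => abs_nonneg _]
  rfl

theorem lintegral_coordENNReal_mul_tsum_rpow {ι : Type*} (u : ESp n → ℝ) (F : ι → ESp n → ℝ)
    {r : ℝ} (hr : 0 ≤ r) :
    ∫⁻ x, coordENNReal u x * (∑' k, coordENNReal (fun z => |F k z|) x ^ r) ^ (1 / r) =
      ∫⁻ z, (∑' k, ENNReal.ofReal (|F k z| ^ r)) ^ (1 / r) * ENNReal.ofReal (u z) := by
  rw [← lintegral_toLp]
  simp only [coordENNReal, ENNReal.ofReal_rpow_of_nonneg (abs_nonneg _) hr, mul_comm]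

theorem exists_isTestFactorization [NeZero n] [NeZero m] {q : ℝ} (hq : 0 ≤ q)
    {u : Fin m → ESp n → ℝ} {v : ESp n → ℝ} (hu : ∀ i, IsWeight (u i)) (hv : IsWeight v)
    (hyp : (A11 (fun i x => u i x ^ (m * q)) ∧ IsAinfty fun x => (∏ i, u i x ^ q) * v x ^ q) ∨
      ((∀ i, IsA1 fun x => u i x ^ (m * q)) ∧ IsAinfty fun x => v x ^ (m * q))) :
    ∃ U g, IsTestFactorization volume (finrank ℝ (Fin n → ℝ)) q
      (fun i => coordENNReal (u i)) (coordENNReal v) U g := by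
  have hmq : 0 ≤ m * q := by positivity
  have hu' := fun i => (hu i).isENNWeight
  have hv' := hv.isENNWeight
  have hup : ∀ i, IsENNWeight volume (coordENNReal fun x => u i x ^ (m * q)) := fun i => by
    rw [coordENNReal_rpow (hu i).2.1 hmq]
    exact (hu' i).rpow _
  rcases hyp with ⟨hA, hD⟩ | ⟨hA, hV⟩
  · have hmix := coordENNReal_mixedWeight (fun i => (hu i).2.1) hv.2.1 hq
    obtain ⟨P, hP, hD'⟩ := hD.exists_isMuckenhoupt (hmix ▸ IsENNWeight.mixedWeight hu' hv' q)
    have hM := hA.isMultilinearMuckenhouptOne hup fun i x => Real.rpow_nonneg ((hu i).2.1 x) _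
    simp only [coordENNReal_rpow (hu _).2.1 hmq] at hM
    exact ⟨_, _, hM.isTestFactorization hu' hv' ((hmix ▸ hD').isAInftyMeasure hP)⟩
  · have hU : ∀ i, IsMuckenhouptOne volume fun x => coordENNReal (u i) x ^ (m * q) := fun i =>
      coordENNReal_rpow (hu i).2.1 hmq ▸ (hA i).isMuckenhouptOne (hup i)
    have hvpow := coordENNReal_rpow hv.2.1 hmq
    obtain ⟨P, hP, hV'⟩ := hV.exists_isMuckenhoupt (hvpow ▸ hv'.rpow _)
    exact ⟨_, _, isTestFactorization_of_isMuckenhouptOne hP hU (hvpow ▸ hV')⟩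

theorem vector_valued_mixed_Ialpha_general {α q : ℝ} (hα0 : 0 < α) (hα : α < m * n)
    (hq : q = n / (m * n - α)) {u : Fin m → ESp n → ℝ} {v : ESp n → ℝ}
    (hu : ∀ i, IsWeight (u i)) (hv : IsWeight v)
    (hyp : (A11 (fun i x => u i x ^ (m * q)) ∧ IsAinfty fun x => (∏ i, u i x ^ q) * v x ^ q) ∨
      ((∀ i, IsA1 fun x => u i x ^ (m * q)) ∧ IsAinfty fun x => v x ^ (m * q)))
    {ι : Fin m → Type*} [∀ i, Countable (ι i)] :
    ∃ C : ℝ≥0∞, 0 < C ∧ C < ⊤ ∧ ∀ r : ℝ, 1 ≤ r → ∀ F : ∀ i, ι i → ESp n → ℝ,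
      (∀ i k, Measurable (F i k)) →
        wnorm (fun x => (∑' k : ∀ i, ι i, (ENNReal.ofReal |multiIα α (fun i => F i (k i)) x| /
            ENNReal.ofReal (v x)) ^ r) ^ (1 / r)) q (fun x => (∏ i, u i x ^ q) * v x ^ q) ≤
          C * ∏ i, ∫⁻ x, (∑' k, ENNReal.ofReal (|F i k x| ^ r)) ^ (1 / r) *
            ENNReal.ofReal (u i x) := by
  have hmn : (0 : ℝ) < m * n := hα0.trans hα
  have : NeZero n := ⟨by rintro rfl; simp at hmn⟩
  have : NeZero m := ⟨by rintro rfl; simp at hmn⟩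
  have hn : (0 : ℝ) < n := by simpa [pos_iff_ne_zero] using NeZero.ne n
  have hβ : 0 < m * n - α := sub_pos.2 hα
  have hq0 : 0 < q := hq ▸ div_pos hn hβ
  have hmq : 1 < m * q := by
    rw [hq, mul_div_assoc', one_lt_div hβ]
    exact sub_lt_self _ hα0
  have hnq : finrank ℝ (Fin n → ℝ) / q = m * n - α := by
    rw [finrank_fin_fun, hq, div_div_cancel₀ hn.ne']
  obtain ⟨U, g, hUg⟩ := exists_isTestFactorization hq0.le hu hv hyp
  obtain ⟨C, hC, hle⟩ := hUg.exists_weakENorm_tsum_le hq0 hmq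
    (fun i => (hu i).isENNWeight) hv.isENNWeight (ι := ι)
  refine ⟨C + 1, by simp, by simpa using hC.lt_top, fun r hr F hF => ?_⟩
  have hr0 : 0 ≤ r := zero_le_one.trans hr
  refine (wnorm_le_weakENorm _ _ hq0.le).trans ?_
  rw [coordENNReal_mixedWeight (fun i => (hu i).2.1) hv.2.1 hq0.le]
  simp only [← lintegral_coordENNReal_mul_tsum_rpow _ _ hr0]
  refine (weakENorm_mono_ae hq0 <| .of_forall fun x => ?_).trans <|
    (hle r hr (fun i k => coordENNReal fun z => |F i k z|) fun i k =>
      ((hF i k).abs.comp (measurable_toLp 2 _)).ennreal_ofReal).trans <|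
    mul_le_mul_left le_self_add _
  rw [hnq]
  gcongr
  · exact ofReal_abs_multiIα_le hα _ x
  · exact le_rfl

end MixedInequality

/-- **Vector-valued mixed weak-type inequality for `𝓘_α`.**  Under the weight
hypotheses of the main theorem, with `S(f⃗) = 𝓘_α(f⃗)/v` and suitable `r`, for countable
families `{f^i_{k}}_k ⊂ L¹(uᵢ)` there is `C > 0` with
`‖(∑_{k⃗} |S(f¹_{k₁},…,f^m_{k_m})|^r)^{1/r}‖_{L^{q,∞}(ν v^q)}
  ≤ C ∏ᵢ ‖(∑_k |f^i_k|^r)^{1/r}‖_{L¹(uᵢ)}`. -/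
theorem vector_valued_mixed_Ialpha {n m : ℕ} (hn : 0 < n) (hm : 0 < m)
    (α q : ℝ) (hα0 : 0 < α) (hα : α < (m : ℝ) * (n : ℝ))
    (hq : q = (n : ℝ) / ((m : ℝ) * (n : ℝ) - α))
    (u : Fin m → ESp n → ℝ) (v : ESp n → ℝ)
    (hu : ∀ i, IsWeight (u i)) (hv : IsWeight v)
    (hyp : (A11 (fun i x => u i x ^ ((m : ℝ) * q)) ∧
              IsAinfty (fun x => (∏ i, u i x ^ q) * v x ^ q))
         ∨ ((∀ i, IsA1 (fun x => u i x ^ ((m : ℝ) * q))) ∧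
              IsAinfty (fun x => v x ^ ((m : ℝ) * q))))
    (r : ℝ) (hr : (q < r ∧ 1 < r ∧ r < 2) ∨ r = 2)
    (F : (i : Fin m) → ℕ → ESp n → ℝ)
    (hFmeas : ∀ i k, Measurable (F i k))
    (hFL1 : ∀ i k, L1norm (F i k) (u i) < ⊤) :
    ∃ C : ℝ≥0∞, 0 < C ∧ C < ⊤ ∧
      wnorm (fun x => (∑' k : Fin m → ℕ,
            (ENNReal.ofReal |multiIα α (fun i => F i (k i)) x| /
              ENNReal.ofReal (v x)) ^ r) ^ (1 / r)) q
          (fun x => (∏ i, u i x ^ q) * v x ^ q)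
        ≤ C * ∏ i, ∫⁻ x,
            (∑' k : ℕ, ENNReal.ofReal (|F i k x| ^ r)) ^ (1 / r) *
              ENNReal.ofReal (u i x) := by
  obtain ⟨C, hC0, hC, hle⟩ := vector_valued_mixed_Ialpha_general hα0 hα hq hu hv hyp
    (ι := fun _ => ℕ)
  exact ⟨C, hC0, hC, hle r (hr.elim (fun h => h.2.1.le) fun h => h ▸ one_le_two) F hFmeas⟩

end
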